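/- arXiv:1711.02611 — 3 statements merged into one kernel-verified Lean document; each statement's English description precedes it below -/
import Mathlib

section
/- Let X be a Banach space and ρ : L¹[0,T] → X a bounded linear map. Then ‖ρ‖ = sup over 0 ≤ a < b ≤ T of ‖ρ(χ_{[a,b]})‖/(b − a), and moreover ‖ρ‖ = lim_{ε→0} sup over intervals [a,b] with 0 < b − a ≤ ε of ‖ρ(χ_{[a,b]})‖/(b − a). Consequently, if two bounded linear maps ρ, ρ' : L¹[0,T] → X satisfy ρ(χ_{[a,b]}) = ρ'(χ_{[a,b]}) + o(|b−a|) uniformly as b − a → 0, then ρ = ρ'. -/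
open MeasureTheory Set

/-- The indicator function of `[a,b]`, as an element of `L¹([0,T])`. -/
noncomputable def indL1 (T a b : ℝ) :
    Lp ℝ 1 (volume.restrict (Icc (0:ℝ) T)) :=
  indicatorConstLp 1 measurableSet_Icc
    (by
      have h1 : (volume.restrict (Icc (0:ℝ) T)) (Icc a b) ≤ volume (Icc a b) :=
        Measure.restrict_apply_le _ _
      have h2 : volume (Icc a b) < ⊤ := by
        simp [Real.volume_Icc]
      exact (lt_of_le_of_lt h1 h2).ne) (1 : ℝ)

open Filter Topology

lemma norm_toL1_indicator_Ioc_le {T a b η : ℝ} (ha : 0 ≤ a) (hab : a ≤ b) (hb : b ≤ T) {h : ℝ → ℝ}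
    (hi : Integrable ((Ioc a b).indicator h) (volume.restrict (Icc (0:ℝ) T)))
    (hη : ∀ x ∈ Ioc a b, |h x| ≤ η) :
    ‖hi.toL1 _‖ ≤ η * (b - a) := by
  have hsub : Ioc a b ⊆ Icc 0 T := fun x hx => ⟨ha.trans hx.1.le, hx.2.trans hb⟩
  rw [L1.norm_of_fun_eq_integral_norm]
  have hvol : ∫ x in Icc 0 T, (Ioc a b).indicator (fun _ => η) x = η * (b - a) := by
    rw [setIntegral_indicator measurableSet_Ioc, inter_eq_right.2 hsub]
    simp [hab, mul_comm]
  rw [← hvol]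
  refine integral_mono hi.norm ?_ fun x => ?_
  · exact (integrable_const η).indicator measurableSet_Ioc
  · by_cases hx : x ∈ Ioc a b
    · simpa [hx] using hη x hx
    · simp [hx]

lemma indL1_eq_toL1_indicator_Ioc (T a b : ℝ)
    (hi : Integrable ((Ioc a b).indicator fun _ => (1 : ℝ)) (volume.restrict (Icc (0:ℝ) T))) :
    indL1 T a b = hi.toL1 _ := by
  refine Lp.ext ?_
  refine indicatorConstLp_coeFn.trans (EventuallyEq.trans ?_ hi.coeFn_toL1.symm)
  exact indicator_ae_eq_of_ae_eq_set (ae_restrict_of_ae Ioc_ae_eq_Icc.symm)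

lemma norm_indL1_le {T a b : ℝ} (ha : 0 ≤ a) (hab : a ≤ b) (hb : b ≤ T) :
    ‖indL1 T a b‖ ≤ b - a := by
  have hi : Integrable ((Ioc a b).indicator fun _ => (1 : ℝ)) (volume.restrict (Icc (0:ℝ) T)) :=
    (integrable_const 1).indicator measurableSet_Ioc
  rw [indL1_eq_toL1_indicator_Ioc T a b hi]
  simpa using norm_toL1_indicator_Ioc_le ha hab hb hi (η := 1) (by simp)

section

variable {X : Type*} [NormedAddCommGroup X] [NormedSpace ℝ X] {T : ℝ}

lemma norm_apply_toL1_indicator_Ioc_le (ρ : Lp ℝ 1 (volume.restrict (Icc (0:ℝ) T)) →L[ℝ] X)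
    {a b C η : ℝ} (ha : 0 ≤ a) (hab : a ≤ b) (hb : b ≤ T) (hC : 0 ≤ C)
    (hρ : ‖ρ (indL1 T a b)‖ ≤ C * (b - a)) {g : ℝ → ℝ} (hg : Continuous g)
    (hη : ∀ x ∈ Ioc a b, |g x - g a| ≤ η)
    (hi : Integrable ((Ioc a b).indicator g) (volume.restrict (Icc (0:ℝ) T))) :
    ‖ρ (hi.toL1 _)‖ ≤ C * (∫ x in a..b, |g x|) + (C + ‖ρ‖) * η * (b - a) := by
  have h1 : Integrable ((Ioc a b).indicator fun _ => (1 : ℝ)) (volume.restrict (Icc (0:ℝ) T)) :=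
    (integrable_const 1).indicator measurableSet_Ioc
  have hd : (Ioc a b).indicator g - g a • (Ioc a b).indicator (fun _ => (1 : ℝ)) =
      (Ioc a b).indicator fun x => g x - g a := by
    ext x
    by_cases hx : x ∈ Ioc a b <;> simp [hx]
  have hi' : Integrable ((Ioc a b).indicator fun x => g x - g a)
      (volume.restrict (Icc (0:ℝ) T)) := hd ▸ hi.sub (h1.smul (g a))
  have hdecomp : hi.toL1 _ = g a • indL1 T a b + hi'.toL1 _ := by
    rw [indL1_eq_toL1_indicator_Ioc T a b h1, ← Integrable.toL1_smul, ← Integrable.toL1_add]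
    congr 1
    rw [← hd]
    exact (add_sub_cancel _ _).symm
  have hrem := norm_toL1_indicator_Ioc_le ha hab hb hi' hη
  have hint : |g a| * (b - a) ≤ (∫ x in a..b, |g x|) + η * (b - a) := by
    have hmono : ∫ x in a..b, |g a| ≤ ∫ x in a..b, (|g x| + η) := by
      refine intervalIntegral.integral_mono_on_of_le_Ioo hab (by simp)
        ((hg.abs.add continuous_const).intervalIntegrable _ _) fun x hx => ?_
      have h2 := hη x ⟨hx.1, hx.2.le⟩
      have h3 := abs_sub_abs_le_abs_sub (g a) (g x)
      rw [abs_sub_comm] at h3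
      linarith
    rw [intervalIntegral.integral_add (hg.abs.intervalIntegrable _ _) (by simp)] at hmono
    simp only [intervalIntegral.integral_const, smul_eq_mul] at hmono
    linarith
  calc ‖ρ (hi.toL1 _)‖ ≤ |g a| * ‖ρ (indL1 T a b)‖ + ‖ρ (hi'.toL1 _)‖ := by
        rw [hdecomp, map_add, map_smul]
        exact (norm_add_le _ _).trans_eq (by rw [norm_smul, Real.norm_eq_abs])
    _ ≤ |g a| * (C * (b - a)) + ‖ρ‖ * (η * (b - a)) :=
        add_le_add (mul_le_mul_of_nonneg_left hρ (abs_nonneg _))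
          ((ρ.le_opNorm _).trans (mul_le_mul_of_nonneg_left hrem (norm_nonneg _)))
    _ ≤ C * (∫ x in a..b, |g x|) + (C + ‖ρ‖) * η * (b - a) := by
        nlinarith [mul_le_mul_of_nonneg_left hint hC]

lemma norm_apply_toL1_le_of_continuous (ρ : Lp ℝ 1 (volume.restrict (Icc (0:ℝ) T)) →L[ℝ] X)
    (hT : 0 < T) {C δ : ℝ} (hC : 0 ≤ C) (hδ : 0 < δ)
    (hρ : ∀ a b : ℝ, 0 ≤ a → a < b → b ≤ T → b - a ≤ δ → ‖ρ (indL1 T a b)‖ ≤ C * (b - a))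
    {g : ℝ → ℝ} (hg : Continuous g) (hi : Integrable g (volume.restrict (Icc (0:ℝ) T))) :
    ‖ρ (hi.toL1 g)‖ ≤ C * ‖hi.toL1 g‖ := by
  have hI (a b : ℝ) : Integrable ((Ioc a b).indicator g) (volume.restrict (Icc (0:ℝ) T)) :=
    hi.indicator measurableSet_Ioc
  have hnorm : ‖hi.toL1 g‖ = ∫ x in (0:ℝ)..T, |g x| := by
    rw [L1.norm_of_fun_eq_integral_norm, intervalIntegral.integral_of_le hT.le,
      integral_Icc_eq_integral_Ioc]
    rfl
  have hfull : hi.toL1 g = (hI 0 T).toL1 _ := by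
    rw [Integrable.toL1_eq_toL1_iff]
    have hmem : ∀ᵐ x ∂volume.restrict (Icc 0 T), x ∈ Ioc 0 T := by
      rw [← restrict_Ioc_eq_restrict_Icc]
      exact ae_restrict_mem measurableSet_Ioc
    filter_upwards [hmem] with x hx
    rw [indicator_of_mem hx]
  have key : ∀ η > 0, ‖ρ (hi.toL1 g)‖ ≤ C * ‖hi.toL1 g‖ + (C + ‖ρ‖) * η * T := by
    intro η hη
    have huc := isCompact_Icc.uniformContinuousOn_of_continuous (s := Icc 0 T) hg.continuousOn
    obtain ⟨δ', hδ', huc⟩ := Metric.uniformContinuousOn_iff.1 huc η hη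
    obtain ⟨n, hn⟩ := exists_nat_gt (T / min δ δ')
    have hmin : 0 < min δ δ' := lt_min hδ hδ'
    have hn0 : (0 : ℝ) < n := lt_of_le_of_lt (by positivity) hn
    set h : ℝ := T / n with hh
    have hh0 : 0 < h := div_pos hT hn0
    have hnh : n * h = T := by rw [hh]; field_simp
    have hlt : h < min δ δ' := by
      rw [hh, div_lt_iff₀ hn0, mul_comm]
      exact (div_lt_iff₀ hmin).1 hn
    have hstep : ∀ k : ℕ, k ≤ n → ‖ρ ((hI 0 (k * h)).toL1 _)‖ ≤
        C * (∫ x in (0:ℝ)..(k * h), |g x|) + (C + ‖ρ‖) * η * (k * h) := by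
      intro k
      induction k with
      | zero =>
        intro _
        have h0 : (hI 0 ((0 : ℕ) * h)).toL1 _ = 0 := by
          rw [← norm_le_zero_iff]
          simpa using norm_toL1_indicator_Ioc_le (η := 0) le_rfl (by simp) (by simpa using hT.le)
            (hI 0 ((0 : ℕ) * h)) (by simp)
        rw [h0]
        simp
      | succ k ih =>
        intro hk
        have hk0 : 0 ≤ k * h := by positivity
        have hsucc : ((k + 1 : ℕ) : ℝ) * h = k * h + h := by push_cast; ring
        have hkT : k * h + h ≤ T := by
          rw [← hsucc, ← hnh]
          exact mul_le_mul_of_nonneg_right (by exact_mod_cast hk) hh0.le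
        rw [hsucc]
        have hadd : (hI 0 (k * h + h)).toL1 _ =
            (hI 0 (k * h)).toL1 _ + (hI (k * h) (k * h + h)).toL1 _ := by
          rw [← Integrable.toL1_add]
          congr 1
          rw [← Ioc_union_Ioc_eq_Ioc hk0 (show k * h ≤ k * h + h by linarith)]
          exact indicator_union_of_disjoint (Ioc_disjoint_Ioc_of_le le_rfl) g
        have hpiece := norm_apply_toL1_indicator_Ioc_le ρ hk0 (by linarith) hkT hC
          (hρ _ _ hk0 (by linarith) hkT (by linarith [min_le_left δ δ'])) hg (η := η)
          (fun x hx => by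
            have := huc x ⟨hk0.trans hx.1.le, hx.2.trans hkT⟩ (k * h) ⟨hk0, by linarith⟩ (by
              rw [Real.dist_eq, abs_of_pos (by linarith [hx.1])]
              linarith [hx.2, min_le_right δ δ'])
            exact this.le) (hI _ _)
        rw [hadd, map_add, ← intervalIntegral.integral_add_adjacent_intervals
          (hg.abs.intervalIntegrable 0 (k * h)) (hg.abs.intervalIntegrable _ _)]
        refine (norm_add_le _ _).trans ((add_le_add (ih (by omega)) hpiece).trans_eq ?_)
        ring
    have hlast := hstep n le_rfl
    rwa [hnh, ← hfull, ← hnorm] at hlast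
  have hlim : Tendsto (fun η : ℝ => C * ‖hi.toL1 g‖ + (C + ‖ρ‖) * η * T) (𝓝[>] 0)
      (𝓝 (C * ‖hi.toL1 g‖ + (C + ‖ρ‖) * 0 * T)) :=
    (Continuous.tendsto (by fun_prop) 0).mono_left nhdsWithin_le_nhds
  rw [mul_zero, zero_mul, add_zero] at hlim
  exact ge_of_tendsto hlim (eventually_mem_nhdsWithin.mono key)

lemma opNorm_le_of_norm_indL1_le (ρ : Lp ℝ 1 (volume.restrict (Icc (0:ℝ) T)) →L[ℝ] X)
    (hT : 0 < T) {C δ : ℝ} (hC : 0 ≤ C) (hδ : 0 < δ)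
    (hρ : ∀ a b : ℝ, 0 ≤ a → a < b → b ≤ T → b - a ≤ δ → ‖ρ (indL1 T a b)‖ ≤ C * (b - a)) :
    ‖ρ‖ ≤ C := by
  refine ρ.opNorm_le_bound hC fun f => ?_
  refine (BoundedContinuousFunction.toLp_denseRange ℝ (volume.restrict (Icc (0:ℝ) T))
    ℝ ENNReal.one_ne_top).induction_on f (isClosed_le (by fun_prop) (by fun_prop)) fun g => ?_
  have hi : Integrable g (volume.restrict (Icc (0:ℝ) T)) := g.integrable _
  have hg : BoundedContinuousFunction.toLp 1 (volume.restrict (Icc (0:ℝ) T)) ℝ g = hi.toL1 g :=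
    Lp.ext ((BoundedContinuousFunction.coeFn_toLp _ _ _ g).trans hi.coeFn_toL1.symm)
  rw [hg]
  exact norm_apply_toL1_le_of_continuous ρ hT hC hδ hρ g.continuous hi

lemma sSup_norm_indL1_div_eq_opNorm (ρ : Lp ℝ 1 (volume.restrict (Icc (0:ℝ) T)) →L[ℝ] X)
    (hT : 0 < T) {ε : ℝ} (hε : 0 < ε) :
    sSup {c : ℝ | ∃ a b : ℝ, 0 ≤ a ∧ a < b ∧ b ≤ T ∧ b - a ≤ ε ∧
      c = ‖ρ (indL1 T a b)‖ / (b - a)} = ‖ρ‖ := by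
  set S := {c : ℝ | ∃ a b : ℝ, 0 ≤ a ∧ a < b ∧ b ≤ T ∧ b - a ≤ ε ∧
    c = ‖ρ (indL1 T a b)‖ / (b - a)}
  have hle : ∀ c ∈ S, c ≤ ‖ρ‖ := by
    rintro c ⟨a, b, ha, hab, hb, -, rfl⟩
    rw [div_le_iff₀ (sub_pos.2 hab)]
    exact ρ.le_opNorm_of_le (norm_indL1_le ha hab.le hb)
  have hnonneg : 0 ≤ sSup S := by
    refine Real.sSup_nonneg ?_
    rintro c ⟨a, b, -, hab, -, -, rfl⟩
    exact div_nonneg (norm_nonneg _) (sub_pos.2 hab).le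
  refine le_antisymm (Real.sSup_le hle (norm_nonneg _))
    (opNorm_le_of_norm_indL1_le ρ hT hnonneg hε fun a b ha hab hb hbε => ?_)
  rw [← div_le_iff₀ (sub_pos.2 hab)]
  exact le_csSup ⟨_, hle⟩ ⟨a, b, ha, hab, hb, hbε, rfl⟩

end

/-- The norm of a bounded linear map `ρ : L¹[0,T] → X` equals the supremum of
`‖ρ(χ_{[a,b]})‖/(b-a)`, it is also the limit of such suprema over short intervals, and
consequently two such maps agreeing on short intervals up to `o(b-a)` are equal. -/
theorem stmt3 {X : Type*} [NormedAddCommGroup X] [NormedSpace ℝ X] [CompleteSpace X]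
    (T : ℝ) (hT : 0 < T)
    (ρ ρ' : Lp ℝ 1 (volume.restrict (Icc (0:ℝ) T)) →L[ℝ] X) :
    ‖ρ‖ = sSup {c : ℝ | ∃ a b : ℝ, 0 ≤ a ∧ a < b ∧ b ≤ T ∧
        c = ‖ρ (indL1 T a b)‖ / (b - a)} ∧
    Filter.Tendsto
      (fun ε : ℝ => sSup {c : ℝ | ∃ a b : ℝ, 0 ≤ a ∧ a < b ∧ b ≤ T ∧ b - a ≤ ε ∧
          c = ‖ρ (indL1 T a b)‖ / (b - a)})
      (nhdsWithin 0 (Ioi 0)) (nhds ‖ρ‖) ∧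
    ((∀ ε > (0:ℝ), ∃ δ > (0:ℝ), ∀ a b : ℝ, 0 ≤ a → a < b → b ≤ T → b - a ≤ δ →
        ‖ρ (indL1 T a b) - ρ' (indL1 T a b)‖ ≤ ε * (b - a)) → ρ = ρ') := by
  refine ⟨?_, ?_, fun h => ?_⟩
  · rw [← sSup_norm_indL1_div_eq_opNorm ρ hT hT]
    congr 1
    ext c
    constructor
    · rintro ⟨a, b, ha, hab, hb, -, hc⟩
      exact ⟨a, b, ha, hab, hb, hc⟩
    · rintro ⟨a, b, ha, hab, hb, hc⟩
      exact ⟨a, b, ha, hab, hb, by linarith, hc⟩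
  · refine tendsto_const_nhds.congr' ?_
    filter_upwards [self_mem_nhdsWithin] with ε hε
    exact (sSup_norm_indL1_div_eq_opNorm ρ hT hε).symm
  · rw [← sub_eq_zero, ← norm_le_zero_iff]
    refine le_of_forall_pos_le_add fun ε hε => ?_
    obtain ⟨δ, hδ, hδε⟩ := h ε hε
    rw [zero_add]
    exact opNorm_le_of_norm_indL1_le (ρ - ρ') hT hε.le hδ hδε
end

section
/- Let π = Θ_m(π₁,…,π_m) be the non-crossing partition obtained by nesting π₁,…,π_m between consecutive elements of a new block of size m+1. Then for s ≤ t, α_π (t−s)^{|π|} = ∫_s^t ∏_{j=1}^m α_{π_j} (t−u)^{|π_j|} du, where |π| denotes the number of blocks of π and α_π is the order-polytope volume of the surrounding order of π. -/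
open MeasureTheory

/-- `π` is a partition of `Fin k` (into nonempty blocks, every point in a unique block). -/
def IsPartitionOn {k : ℕ} (π : Finset (Finset (Fin k))) : Prop :=
  (∀ B ∈ π, B.Nonempty) ∧ ∀ i : Fin k, ∃! B : Finset (Fin k), B ∈ π ∧ i ∈ B

/-- `i` and `j` lie in the same block of `π`. -/
def SameBlock {k : ℕ} (π : Finset (Finset (Fin k))) (i j : Fin k) : Prop :=
  ∃ B ∈ π, i ∈ B ∧ j ∈ B

/-- `π` is a non-crossing partition of `Fin k`. -/
def IsNC {k : ℕ} (π : Finset (Finset (Fin k))) : Prop :=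
  IsPartitionOn π ∧ ∀ i₁ j₁ i₂ j₂ : Fin k, i₁ < j₁ → j₁ < i₂ → i₂ < j₂ →
    SameBlock π i₁ i₂ → SameBlock π j₁ j₂ → SameBlock π i₁ j₁

/-- `B'` surrounds `B`. -/
def Surrounds {ι : Type*} [LinearOrder ι] (B' B : Finset ι) : Prop :=
  ∃ i ∈ B', ∃ j ∈ B', ∀ l ∈ B, i < l ∧ l < j

/-- The order-polytope volume `α_π` of the nesting order of `π`. -/
noncomputable def alphaNC {ι : Type*} [LinearOrder ι] (π : Finset (Finset ι)) : ℝ :=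
  (volume {τ : ↥π → ℝ | (∀ B : ↥π, τ B ∈ Set.Icc (0:ℝ) 1) ∧
      ∀ B B' : ↥π, Surrounds (B' : Finset ι) (B : Finset ι) → τ B' < τ B}).toReal

/-- The `j`-th nested component of `π` relative to the outer block enumerated by `e`:
the blocks of `π` other than `B` lying strictly between the `j`-th and `(j+1)`-st elements
of `B`. -/
noncomputable def nestSeg {K m : ℕ} (π : Finset (Finset (Fin K))) (B : Finset (Fin K))
    (e : Fin (m + 1) → Fin K) (j : Fin m) : Finset (Finset (Fin K)) := by
  classical
  exact π.filter (fun C => C ≠ B ∧ ∀ i ∈ C, e j.castSucc < i ∧ i < e j.succ)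

/-- The half-open order polytope of the relation `r`, with coordinates in `(a, 1]`. -/
def orderPolytope {ι : Type*} (r : ι → ι → Prop) (a : ℝ) : Set (ι → ℝ) :=
  {τ | (∀ i, τ i ∈ Set.Ioc a 1) ∧ ∀ i j, r i j → τ i < τ j}

theorem measurableSet_orderPolytope {ι : Type*} [Finite ι] (r : ι → ι → Prop) (a : ℝ) :
    MeasurableSet (orderPolytope r a) := by
  have h : orderPolytope r a =
      (⋂ i, {τ : ι → ℝ | τ i ∈ Set.Ioc a 1}) ∩ ⋂ i, ⋂ j, ⋂ _ : r i j, {τ | τ i < τ j} := by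
    ext τ
    simp [orderPolytope]
  rw [h]
  refine (MeasurableSet.iInter fun i => measurable_pi_apply i measurableSet_Ioc).inter
    (MeasurableSet.iInter fun i => MeasurableSet.iInter fun j => MeasurableSet.iInter fun _ =>
      measurableSet_lt (measurable_pi_apply i) (measurable_pi_apply j))

/-- Replacing the cube `[a, 1]` by `(a, 1]` does not change the volume of an order polytope. -/
theorem volume_orderPolytope_eq_volume_Icc {ι : Type*} [Fintype ι] (r : ι → ι → Prop) (a : ℝ) :
    volume (orderPolytope r a) =
      volume {τ : ι → ℝ | (∀ i, τ i ∈ Set.Icc a 1) ∧ ∀ i j, r i j → τ i < τ j} := by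
  apply measure_congr
  have h : ∀ᵐ τ : ι → ℝ, ∀ i, τ i ≠ a :=
    ae_all_iff.2 fun i => Measure.ae_eval_ne (fun _ : ι => (volume : Measure ℝ)) i a
  filter_upwards [h] with τ hτ
  refine propext (and_congr (forall_congr' fun i => ?_) Iff.rfl)
  exact and_congr ⟨le_of_lt, fun h => lt_of_le_of_ne h (hτ i).symm⟩ Iff.rfl

/-- Affine rescaling of order polytopes. -/
theorem volume_orderPolytope {ι : Type*} [Fintype ι] (r : ι → ι → Prop) {u : ℝ} (hu : u < 1) :
    volume (orderPolytope r u) =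
      ENNReal.ofReal (1 - u) ^ Fintype.card ι * volume (orderPolytope r 0) := by
  have hu' : 0 < 1 - u := sub_pos.2 hu
  have h : orderPolytope r u =
      (fun τ => τ + fun _ => -u) ⁻¹' ((fun τ => (1 - u)⁻¹ • τ) ⁻¹' orderPolytope r 0) := by
    ext τ
    refine and_congr (forall_congr' fun i => ?_)
      (forall_congr' fun i => forall_congr' fun j => imp_congr_right fun _ => ?_)
    · have h₁ : 0 < (1 - u)⁻¹ * (τ i + -u) ↔ u < τ i := by
        rw [mul_pos_iff_of_pos_left (inv_pos.2 hu')]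
        constructor <;> intro <;> linarith
      have h₂ : (1 - u)⁻¹ * (τ i + -u) ≤ 1 ↔ τ i ≤ 1 := by
        rw [inv_mul_le_iff₀ hu']
        constructor <;> intro <;> linarith
      exact and_congr h₁.symm h₂.symm
    · have h₃ : (1 - u)⁻¹ * (τ i + -u) < (1 - u)⁻¹ * (τ j + -u) ↔ τ i < τ j := by
        rw [mul_lt_mul_iff_right₀ (inv_pos.2 hu'), add_lt_add_iff_right]
      exact h₃.symm
  rw [h, measure_preimage_add_right, Measure.addHaar_preimage_smul _ (inv_pos.2 hu').ne',
    Module.finrank_fintype_fun_eq_card, ← inv_pow, inv_inv, abs_of_pos (pow_pos hu' _),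
    ENNReal.ofReal_pow hu'.le]

/-- The map assembling a vector indexed by `ι ≃ Option (Σ j, κ j)` from its coordinate at `none`
and its components indexed by the `κ j`. -/
def assemble {ι J : Type*} {κ : J → Type*} (E : Option (Σ j, κ j) ≃ ι)
    (x : ℝ × (∀ j, κ j → ℝ)) (i : ι) : ℝ :=
  (E.symm i).elim x.1 fun p => x.2 p.1 p.2

theorem assemble_none {ι J : Type*} {κ : J → Type*} (E : Option (Σ j, κ j) ≃ ι)
    (x : ℝ × (∀ j, κ j → ℝ)) : assemble E x (E none) = x.1 := by
  simp [assemble]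

theorem assemble_some {ι J : Type*} {κ : J → Type*} (E : Option (Σ j, κ j) ≃ ι)
    (x : ℝ × (∀ j, κ j → ℝ)) (j : J) (k : κ j) : assemble E x (E (some ⟨j, k⟩)) = x.2 j k := by
  simp [assemble]

theorem forall_option_sigma_equiv {ι J : Type*} {κ : J → Type*} (E : Option (Σ j, κ j) ≃ ι)
    {p : ι → Prop} : (∀ i, p i) ↔ p (E none) ∧ ∀ j k, p (E (some ⟨j, k⟩)) := by
  rw [← E.forall_congr_right, Option.forall, Sigma.forall]

theorem measurePreserving_assemble {ι J : Type*} {κ : J → Type*} [Fintype ι] [Fintype J]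
    [∀ j, Fintype (κ j)] (E : Option (Σ j, κ j) ≃ ι) :
    MeasurePreserving (assemble E) := by
  have hmeas : Measurable (assemble E) := by
    refine measurable_pi_lambda _ fun i => ?_
    obtain ⟨o, rfl⟩ := E.surjective i
    rcases o with _ | ⟨j, k⟩
    · simpa only [assemble_none] using measurable_fst
    · simp only [assemble_some]
      fun_prop
  refine ⟨hmeas, (Measure.pi_eq fun s hs => ?_).symm⟩
  have hpre : assemble E ⁻¹' Set.univ.pi s =
      s (E none) ×ˢ Set.univ.pi fun j => Set.univ.pi fun k => s (E (some ⟨j, k⟩)) := by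
    ext x
    simp only [Set.mem_preimage, Set.mem_univ_pi, Set.mem_prod]
    rw [forall_option_sigma_equiv E]
    simp only [assemble_none, assemble_some]
  rw [Measure.map_apply hmeas (MeasurableSet.univ_pi hs), hpre, Measure.volume_eq_prod,
    Measure.prod_prod, volume_pi_pi, ← E.prod_comp, Fintype.prod_option, Fintype.prod_sigma]
  simp only [volume_pi_pi]

theorem lintegral_one_sub_pow (n : ℕ) :
    ∫⁻ u in Set.Ioc (0 : ℝ) 1, ENNReal.ofReal (1 - u) ^ n = ENNReal.ofReal (1 / (n + 1)) := by
  have hint : ∫ u in (0 : ℝ)..1, (1 - u) ^ n = 1 / (n + 1) := by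
    rw [intervalIntegral.integral_comp_sub_left (fun x : ℝ => x ^ n) 1]
    simp
  rw [← hint, intervalIntegral.integral_of_le zero_le_one, ofReal_integral_eq_lintegral_ofReal]
  · refine setLIntegral_congr_fun measurableSet_Ioc fun u hu => ?_
    exact (ENNReal.ofReal_pow (sub_nonneg.2 hu.2) n).symm
  · exact (Continuous.integrableOn_Ioc (by fun_prop))
  · filter_upwards [ae_restrict_mem measurableSet_Ioc] with u hu
    exact pow_nonneg (sub_nonneg.2 hu.2) n

/-- The volume of the order polytope of a disjoint union of relations `r' j` with a new least
element adjoined. -/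
theorem volume_orderPolytope_adjoin_bot {ι J : Type*} {κ : J → Type*} [Fintype ι] [Fintype J]
    [∀ j, Fintype (κ j)] (E : Option (Σ j, κ j) ≃ ι) (r : ι → ι → Prop)
    (r' : ∀ j, κ j → κ j → Prop)
    (hbot : ∀ i, ¬ r i (E none)) (hlt : ∀ j k, r (E none) (E (some ⟨j, k⟩)))
    (hsame : ∀ j k k', r (E (some ⟨j, k⟩)) (E (some ⟨j, k'⟩)) ↔ r' j k k')
    (hne : ∀ j k j' k', r (E (some ⟨j, k⟩)) (E (some ⟨j', k'⟩)) → j = j') :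
    volume (orderPolytope r 0) =
      (∏ j, volume (orderPolytope (r' j) 0)) *
        ENNReal.ofReal (1 / ((∑ j, Fintype.card (κ j) : ℕ) + 1)) := by
  have hmem : ∀ x, assemble E x ∈ orderPolytope r 0 ↔
      x.1 ∈ Set.Ioc 0 1 ∧ x.2 ∈ Set.univ.pi fun j => orderPolytope (r' j) x.1 := by
    intro x
    simp only [orderPolytope, Set.mem_ofPred_eq, Set.mem_univ_pi, forall_option_sigma_equiv E,
      assemble_none, assemble_some, hbot, false_imp_iff, true_and, hlt, true_imp_iff]
    constructor
    · rintro ⟨⟨h₀, h₁⟩, h₂, h₃⟩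
      exact ⟨h₀, fun j => ⟨fun k => ⟨h₂ j k, (h₁ j k).2⟩,
        fun k k' h => h₃ j k j k' ((hsame j k k').2 h)⟩⟩
    · rintro ⟨h₀, h⟩
      refine ⟨⟨h₀, fun j k => ⟨h₀.1.trans ((h j).1 k).1, ((h j).1 k).2⟩⟩,
        fun j k => ((h j).1 k).1, fun j k j' k' hr => ?_⟩
      obtain rfl := hne j k j' k' hr
      exact (h j).2 k k' ((hsame j k k').1 hr)
  have hslice : ∀ u : ℝ, volume (Prod.mk u ⁻¹' (assemble E ⁻¹' orderPolytope r 0)) =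
      (Set.Ioc (0 : ℝ) 1).indicator
        (fun u => ∏ j, volume (orderPolytope (r' j) u)) u := by
    intro u
    by_cases hu : u ∈ Set.Ioc (0 : ℝ) 1
    · rw [Set.indicator_of_mem hu, ← volume_pi_pi]
      congr 1
      ext σ
      exact (hmem (u, σ)).trans (and_iff_right hu)
    · rw [Set.indicator_of_notMem hu]
      convert measure_empty (μ := volume)
      ext σ
      exact iff_of_false (fun h => hu ((hmem (u, σ)).1 h).1) (Set.notMem_empty σ)
  have hm := measurableSet_orderPolytope r 0
  rw [← (measurePreserving_assemble E).measure_preimage hm.nullMeasurableSet,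
    Measure.volume_eq_prod,
    Measure.prod_apply ((measurePreserving_assemble E).measurable hm)]
  simp_rw [hslice]
  rw [lintegral_indicator measurableSet_Ioc,
    ← lintegral_one_sub_pow, ← restrict_Ioo_eq_restrict_Ioc,
    ← lintegral_const_mul _ (by fun_prop)]
  refine setLIntegral_congr_fun measurableSet_Ioo fun u hu => ?_
  simp only [volume_orderPolytope _ hu.2]
  rw [Finset.prod_mul_distrib, Finset.prod_pow_eq_pow_sum, mul_comm]

theorem alphaNC_eq_toReal_volume_orderPolytope {ι : Type*} [LinearOrder ι]
    (π : Finset (Finset ι)) :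
    alphaNC π =
      (volume (orderPolytope (fun B' B : ↥π => Surrounds (B' : Finset ι) B) 0)).toReal := by
  rw [volume_orderPolytope_eq_volume_Icc, alphaNC]
  congr 2
  ext τ
  exact and_congr Iff.rfl forall_comm

theorem mem_nestSeg {K m : ℕ} {π : Finset (Finset (Fin K))} {B C : Finset (Fin K)}
    {e : Fin (m + 1) → Fin K} {j : Fin m} :
    C ∈ nestSeg π B e j ↔
      C ∈ π ∧ C ≠ B ∧ ∀ i ∈ C, e j.castSucc < i ∧ i < e j.succ := by
  simp [nestSeg]

theorem gap_unique {K m : ℕ} {e : Fin (m + 1) → Fin K} (he : StrictMono e) {j j' : Fin m}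
    {i : Fin K} (h : e j.castSucc < i ∧ i < e j.succ) (h' : e j'.castSucc < i ∧ i < e j'.succ) :
    j = j' := by
  have h₁ := he.lt_iff_lt.1 (h.1.trans h'.2)
  have h₂ := he.lt_iff_lt.1 (h'.1.trans h.2)
  simp only [Fin.lt_def, Fin.val_castSucc, Fin.val_succ] at h₁ h₂
  ext
  omega

/-- The blocks of a nested partition are the outer block and those of the nested components. -/
theorem exists_equiv_nestSeg {K m : ℕ} {π : Finset (Finset (Fin K))}
    (hne : ∀ C ∈ π, C.Nonempty) {B : Finset (Fin K)} (hB : B ∈ π) {e : Fin (m + 1) → Fin K}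
    (he : StrictMono e)
    (hnest : ∀ C ∈ π, C ≠ B → ∃ j : Fin m, ∀ i ∈ C, e j.castSucc < i ∧ i < e j.succ) :
    ∃ E : Option (Σ j, ↥(nestSeg π B e j)) ≃ ↥π, (E none : Finset (Fin K)) = B ∧
      ∀ j (C : ↥(nestSeg π B e j)), (E (some ⟨j, C⟩) : Finset (Fin K)) = C := by
  let f : Option (Σ j, ↥(nestSeg π B e j)) → ↥π := fun o =>
    o.elim ⟨B, hB⟩ fun p => ⟨p.2, (mem_nestSeg.1 p.2.2).1⟩
  have hf : Function.Bijective f := by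
    constructor
    · rintro (_ | ⟨j, C, hC⟩) (_ | ⟨j', C', hC'⟩) h
      · rfl
      · exact absurd (congrArg Subtype.val h).symm (mem_nestSeg.1 hC').2.1
      · exact absurd (congrArg Subtype.val h) (mem_nestSeg.1 hC).2.1
      · obtain rfl : C = C' := congrArg Subtype.val h
        obtain ⟨i, hi⟩ := hne C (mem_nestSeg.1 hC).1
        obtain rfl := gap_unique he ((mem_nestSeg.1 hC).2.2 i hi) ((mem_nestSeg.1 hC').2.2 i hi)
        rfl
    · rintro ⟨C, hC⟩
      by_cases h : C = B
      · exact ⟨none, Subtype.ext h.symm⟩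
      · obtain ⟨j, hj⟩ := hnest C hC h
        exact ⟨some ⟨j, C, mem_nestSeg.2 ⟨hC, h, hj⟩⟩, rfl⟩
  exact ⟨Equiv.ofBijective f hf, rfl, fun _ _ => rfl⟩

/-- For a non-crossing partition `π = Θ_m(π₁, …, π_m)`, obtained by nesting `π₁, …, π_m`
into the gaps of an outer block `B` with increasing enumeration `e`, the order-polytope
volumes satisfy `α_π (t-s)^{|π|} = ∫_s^t ∏_j α_{π_j} (t-u)^{|π_j|} du`. -/
theorem stmt14 (K m : ℕ) (π : Finset (Finset (Fin K))) (hπ : IsNC π)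
    (B : Finset (Fin K)) (hB : B ∈ π)
    (e : Fin (m + 1) → Fin K) (he : StrictMono e) (heB : B = Finset.image e Finset.univ)
    (hnest : ∀ C ∈ π, C ≠ B → ∃ j : Fin m, ∀ i ∈ C, e j.castSucc < i ∧ i < e j.succ)
    (s t : ℝ) (hst : s ≤ t) :
    alphaNC π * (t - s) ^ π.card =
      ∫ u in s..t, ∏ j : Fin m, alphaNC (nestSeg π B e j) * (t - u) ^ (nestSeg π B e j).card := by
  have hne := hπ.1.1
  have heB' : ∀ l, e l ∈ B := fun l => by simp [heB]
  obtain ⟨E, hE₀, hE₁⟩ := exists_equiv_nestSeg hne hB he hnest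
  have hvol := volume_orderPolytope_adjoin_bot E
    (fun B' B : ↥π => Surrounds (B' : Finset (Fin K)) B)
    (fun j (B' C : ↥(nestSeg π B e j)) => Surrounds (B' : Finset (Fin K)) C)
    (fun D => by
      rw [hE₀]
      rintro ⟨i, hi, i', hi', h⟩
      by_cases hD : (D : Finset (Fin K)) = B
      · exact lt_irrefl i (h i (hD ▸ hi)).1
      · obtain ⟨j, hj⟩ := hnest D D.2 hD
        exact lt_asymm (hj i hi).1 (h _ (heB' _)).1)
    (fun j C => by
      rw [hE₀, hE₁]
      exact ⟨_, heB' _, _, heB' _, (mem_nestSeg.1 C.2).2.2⟩)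
    (fun j C C' => by rw [hE₁, hE₁])
    (fun j C j' C' => by
      rw [hE₁, hE₁]
      rintro ⟨i, hi, i', hi', h⟩
      obtain ⟨l, hl⟩ := hne C' (mem_nestSeg.1 C'.2).1
      have hC := (mem_nestSeg.1 C.2).2.2
      exact gap_unique he ⟨(hC i hi).1.trans (h l hl).1, (h l hl).2.trans (hC i' hi').2⟩
        ((mem_nestSeg.1 C'.2).2.2 l hl))
  have hcard : π.card = ∑ j, (nestSeg π B e j).card + 1 := by
    have := Fintype.card_congr E
    rw [Fintype.card_option, Fintype.card_sigma] at this
    simpa using this.symm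
  have halpha : alphaNC π = (∏ j, alphaNC (nestSeg π B e j)) *
      (1 / ((∑ j, (nestSeg π B e j).card : ℕ) + 1)) := by
    simp only [alphaNC_eq_toReal_volume_orderPolytope]
    rw [hvol, ENNReal.toReal_mul, ENNReal.toReal_prod, ENNReal.toReal_ofReal (by positivity)]
    simp only [Fintype.card_coe]
  simp only [Finset.prod_mul_distrib, Finset.prod_pow_eq_pow_sum]
  rw [intervalIntegral.integral_const_mul,
    intervalIntegral.integral_comp_sub_left
      (fun x : ℝ => x ^ ∑ j, (nestSeg π B e j).card) t, integral_pow, halpha, hcard, sub_self,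
    zero_pow (Nat.succ_ne_zero _)]
  ring
end

section
/- The number of non-crossing partitions π of {1,…,k} all of whose blocks have size at least 2, weighted by α_π · C^{|π|} M^{k−2|π|} where α_π is the order-polytope volume of the nesting order, has generating function Σ_{k≥0} Σ_{π ∈ NC_{≥2}(k)} α_π C^{|π|} M^{k−2|π|} ζ^k = 1/(√((1/ζ − M)² − 2C) + M) · (1/ζ) for |ζ| < 1/(M + √(2C)); equivalently, with G̃(ζ) denoting the left-hand side, G̃(ζ) = ( √((ζ^{-1} − M)² − 2C) + M )^{-1} as formal/convergent power series. (This is the scalar identity (eq. for t−s = 1) of Theorem 4.3 of the paper.) -/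
open MeasureTheory

/-- The (finite) set of non-crossing partitions of `{1, …, k}` with no singleton blocks. -/
noncomputable def NCge2 (k : ℕ) : Finset (Finset (Finset (Fin k))) := by
  classical
  exact Finset.univ.filter (fun π => IsNC π ∧ ∀ B ∈ π, 2 ≤ B.card)

/-- The labelings of `ι` with values in `[0, t)` that strictly increase along `r`. -/
def increasingLabelings {ι : Type*} (r : ι → ι → Prop) (t : ℝ) : Set (ι → ℝ) :=
  {τ | (∀ i, τ i ∈ Set.Ico (0 : ℝ) t) ∧ ∀ i j, r i j → τ i < τ j}

/-- The volume of the order polytope of `r`. -/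
noncomputable def orderVolume {ι : Type*} [Fintype ι] (r : ι → ι → Prop) : ℝ :=
  (volume (increasingLabelings r 1)).toReal

lemma measurableSet_increasingLabelings {ι : Type*} [Fintype ι] (r : ι → ι → Prop) (t : ℝ) :
    MeasurableSet (increasingLabelings r t) := by
  unfold increasingLabelings
  simp only [Set.ofPred_and, Set.ofPred_forall]
  refine MeasurableSet.inter (MeasurableSet.iInter fun i => ?_)
    (MeasurableSet.iInter fun i => MeasurableSet.iInter fun j => MeasurableSet.iInter fun _ => ?_)
  · exact (measurable_pi_apply i) measurableSet_Ico
  · exact measurableSet_lt (measurable_pi_apply i) (measurable_pi_apply j)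

lemma volume_increasingLabelings_ne_top {ι : Type*} [Fintype ι] (r : ι → ι → Prop) (t : ℝ) :
    volume (increasingLabelings r t) ≠ ⊤ := by
  have h : increasingLabelings r t ⊆ Set.Icc (fun _ => 0) (fun _ => t) :=
    fun τ hτ => ⟨fun i => (hτ.1 i).1, fun i => (hτ.1 i).2.le⟩
  exact ((measure_mono h).trans_lt isCompact_Icc.measure_lt_top).ne

lemma volume_setOf_eq_eq_zero {ι : Type*} [Fintype ι] {i j : ι} (hij : i ≠ j) :
    volume {τ : ι → ℝ | τ i = τ j} = 0 := by
  classical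
  have h := Measure.addHaar_submodule (volume : Measure (ι → ℝ))
    (LinearMap.ker (LinearMap.proj (R := ℝ) (φ := fun _ : ι => ℝ) i - LinearMap.proj j)) ?_
  · convert h using 2
    ext τ
    simp [sub_eq_zero]
  · intro h
    have : (Pi.single i (1 : ℝ) : ι → ℝ) ∈
        LinearMap.ker (LinearMap.proj (R := ℝ) (φ := fun _ : ι => ℝ) i - LinearMap.proj j) := by
      rw [h]; trivial
    simp [hij] at this

lemma volume_increasingLabelings {ι : Type*} [Fintype ι] (r : ι → ι → Prop) {t : ℝ}
    (ht : 0 < t) : volume (increasingLabelings r t) =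
      ENNReal.ofReal (t ^ Fintype.card ι) * volume (increasingLabelings r 1) := by
  have h : increasingLabelings r t = (fun τ => t⁻¹ • τ) ⁻¹' increasingLabelings r 1 := by
    ext τ
    have h1 : ∀ x : ℝ, t⁻¹ * x ∈ Set.Ico (0 : ℝ) 1 ↔ x ∈ Set.Ico (0 : ℝ) t := by
      intro x
      rw [Set.mem_Ico, Set.mem_Ico, inv_mul_lt_iff₀ ht, mul_one,
        mul_nonneg_iff_of_pos_left (by positivity)]
    have h2 : ∀ x y : ℝ, t⁻¹ * x < t⁻¹ * y ↔ x < y :=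
      fun x y => mul_lt_mul_iff_right₀ (by positivity)
    simp only [increasingLabelings, Set.mem_ofPred_eq, Set.mem_preimage, Pi.smul_apply, smul_eq_mul,
      h1, h2]
  rw [h, Measure.addHaar_preimage_smul _ (inv_ne_zero ht.ne')]
  simp [abs_of_pos ht]

lemma orderVolume_congr {ι κ : Type*} [Fintype ι] [Fintype κ] (e : ι ≃ κ) {r : ι → ι → Prop}
    {s : κ → κ → Prop} (h : ∀ i j, r i j ↔ s (e i) (e j)) : orderVolume r = orderVolume s := by
  have hm := (volume_measurePreserving_piCongrLeft (fun _ : κ => ℝ) e).measure_preimage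
    (measurableSet_increasingLabelings s 1).nullMeasurableSet
  unfold orderVolume
  rw [← hm]
  congr 2
  ext τ
  have : ∀ i, MeasurableEquiv.piCongrLeft (fun _ : κ => ℝ) e τ (e i) = τ i := fun i => by
    simp [MeasurableEquiv.coe_piCongrLeft, Equiv.piCongrLeft_apply_apply]
  simp only [increasingLabelings, Set.mem_ofPred_eq, Set.mem_preimage, ← e.forall_congr_right,
    this, h]

lemma volume_Icc_labelings {ι : Type*} [Fintype ι] (r : ι → ι → Prop) :
    volume {τ : ι → ℝ | (∀ i, τ i ∈ Set.Icc (0 : ℝ) 1) ∧ ∀ i j, r i j → τ i < τ j} =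
      volume (increasingLabelings r 1) := by
  apply measure_congr
  have h : ∀ᵐ τ : ι → ℝ, ∀ i, τ i ≠ 1 :=
    ae_all_iff.2 fun i => Measure.ae_eval_ne (fun _ : ι => (volume : Measure ℝ)) i 1
  filter_upwards [h] with τ hτ
  apply propext
  change ((∀ i, τ i ∈ Set.Icc (0 : ℝ) 1) ∧ _) ↔ ((∀ i, τ i ∈ Set.Ico (0 : ℝ) 1) ∧ _)
  refine and_congr_left' (forall_congr' fun i => ?_)
  rw [Set.mem_Icc, Set.mem_Ico, lt_iff_le_and_ne]
  simp [hτ i]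

/-- Those labelings in `[0, 1)` whose strict maximum is attained at `b`. -/
def labelingsMaxAt {ι : Type*} (r : ι → ι → Prop) (b : ι) : Set (ι → ℝ) :=
  {τ | τ ∈ increasingLabelings r 1 ∧ ∀ j, j ≠ b → τ j < τ b}

lemma measurableSet_labelingsMaxAt {ι : Type*} [Fintype ι] (r : ι → ι → Prop) (b : ι) :
    MeasurableSet (labelingsMaxAt r b) := by
  unfold labelingsMaxAt
  simp only [Set.ofPred_and, Set.ofPred_forall]
  refine (measurableSet_increasingLabelings r 1).inter
    (MeasurableSet.iInter fun j => MeasurableSet.iInter fun _ => ?_)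
  exact measurableSet_lt (measurable_pi_apply j) (measurable_pi_apply b)

lemma volume_increasingLabelings_eq_sum {ι : Type*} [Fintype ι] [Nonempty ι]
    (r : ι → ι → Prop) :
    volume (increasingLabelings r 1) = ∑ b, volume (labelingsMaxAt r b) := by
  rw [← tsum_fintype (L := .unconditional ι), ← measure_iUnion _ (measurableSet_labelingsMaxAt r)]
  · apply measure_congr
    have h : ∀ᵐ τ : ι → ℝ, ∀ i j, i ≠ j → τ i ≠ τ j := by
      refine ae_all_iff.2 fun i => ae_all_iff.2 fun j => ?_
      by_cases hij : i = j
      · simp [hij]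
      · simpa [hij, ae_iff] using volume_setOf_eq_eq_zero hij
    filter_upwards [h] with τ hτ
    apply propext
    change τ ∈ increasingLabelings r 1 ↔ τ ∈ ⋃ b, labelingsMaxAt r b
    simp only [Set.mem_iUnion]
    constructor
    · intro hmem
      obtain ⟨b, hb⟩ := Finite.exists_max τ
      exact ⟨b, hmem, fun j hj => lt_of_le_of_ne (hb j) (hτ j b hj)⟩
    · rintro ⟨b, hb⟩
      exact hb.1
  · intro b c hbc
    refine Set.disjoint_left.2 fun τ hb hc => ?_
    exact lt_asymm (hb.2 c hbc.symm) (hc.2 b hbc)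

lemma lintegral_Ioo_pow (n : ℕ) :
    ∫⁻ t in Set.Ioo (0 : ℝ) 1, ENNReal.ofReal (t ^ n) = ENNReal.ofReal ((n + 1 : ℝ)⁻¹) := by
  rw [← ofReal_integral_eq_lintegral_ofReal]
  · rw [← integral_Ioc_eq_integral_Ioo, ← intervalIntegral.integral_of_le zero_le_one, integral_pow]
    simp
  · exact ((continuous_pow n).continuousOn.integrableOn_Icc (a := 0) (b := 1)).mono_set
      Set.Ioo_subset_Icc_self
  · filter_upwards [ae_restrict_mem measurableSet_Ioo] with t ht
    exact pow_nonneg ht.1.le n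

lemma volume_labelingsMaxAt {ι : Type*} [Fintype ι] [DecidableEq ι] (r : ι → ι → Prop) (b : ι)
    (hb : ∀ j, ¬ r b j) :
    volume (labelingsMaxAt r b) = ENNReal.ofReal ((Fintype.card ι : ℝ)⁻¹) *
      volume (increasingLabelings (fun i j : {i // i ≠ b} => r i j) 1) := by
  let e : (ι → ℝ) ≃ᵐ ℝ × ({i // ¬ i = b} → ℝ) :=
    (MeasurableEquiv.piEquivPiSubtypeProd (fun _ : ι => ℝ) (· = b)).trans
      ((MeasurableEquiv.funUnique {i // i = b} ℝ).prodCongr (MeasurableEquiv.refl _))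
  have he : MeasurePreserving e volume volume := by
    refine (volume_preserving_piEquivPiSubtypeProd (fun _ : ι => ℝ) (· = b)).trans ?_
    convert! (volume_preserving_funUnique {i // i = b} ℝ).prod
      (MeasurePreserving.id (volume : Measure ({i // ¬ i = b} → ℝ)))
    rw [Measure.volume_eq_prod]
    congr!
  have he1 : ∀ τ, (e τ).1 = τ b := fun τ => rfl
  have he2 : ∀ τ, (e τ).2 = fun i : {i // ¬ i = b} => τ i := fun τ => rfl
  set T : Set (ℝ × ({i // ¬ i = b} → ℝ)) := {x | x.1 ∈ Set.Ico (0 : ℝ) 1 ∧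
    x.2 ∈ increasingLabelings (fun i j : {i // i ≠ b} => r i j) x.1} with hTdef
  have hT : labelingsMaxAt r b = e ⁻¹' T := by
    ext τ
    simp only [labelingsMaxAt, increasingLabelings, Set.mem_ofPred_eq, Set.mem_preimage, hTdef, he1,
      he2, Set.mem_Ico]
    constructor
    · rintro ⟨⟨h1, h2⟩, h3⟩
      exact ⟨h1 b, fun i => ⟨(h1 i).1, h3 i i.2⟩, fun i j hij => h2 i j hij⟩
    · rintro ⟨h1, h2, h3⟩
      refine ⟨⟨fun i => ?_, fun i j hij => ?_⟩, fun j hj => (h2 ⟨j, hj⟩).2⟩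
      · by_cases hi : i = b
        · exact hi ▸ h1
        · exact ⟨(h2 ⟨i, hi⟩).1, (h2 ⟨i, hi⟩).2.trans h1.2⟩
      · have hi : i ≠ b := fun h => hb j (h ▸ hij)
        by_cases hj : j = b
        · exact hj ▸ (h2 ⟨i, hi⟩).2
        · exact h3 ⟨i, hi⟩ ⟨j, hj⟩ hij
  have hTm : MeasurableSet T := by
    rw [← MeasurableEquiv.measurableSet_preimage e, ← hT]
    exact measurableSet_labelingsMaxAt r b
  rw [hT, he.measure_preimage hTm.nullMeasurableSet]
  change ((volume : Measure ℝ).prod volume) T = _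
  rw [Measure.prod_apply hTm]
  have hcard : Fintype.card ι = Fintype.card {i // ¬ i = b} + 1 := by
    rw [Fintype.card_subtype_compl]
    have := Fintype.card_pos_iff.2 ⟨b⟩
    simp; omega
  have hslice : ∀ᵐ t : ℝ, volume (Prod.mk t ⁻¹' T) = (Set.Ioo (0 : ℝ) 1).indicator (fun t =>
      ENNReal.ofReal (t ^ Fintype.card {i // ¬ i = b}) *
        volume (increasingLabelings (fun i j : {i // i ≠ b} => r i j) 1)) t := by
    have h0 : ∀ᵐ t : ℝ, t ≠ 0 := by simp [ae_iff]
    filter_upwards [h0] with t ht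
    by_cases h : t ∈ Set.Ioo (0 : ℝ) 1
    · rw [Set.indicator_of_mem h, ← volume_increasingLabelings _ h.1]
      congr 1
      ext σ
      simp [hTdef, h.1.le, h.2]
    · rw [Set.indicator_of_notMem h]
      convert measure_empty (μ := volume)
      ext σ
      simp only [Set.mem_preimage, hTdef, Set.mem_ofPred_eq, Set.mem_empty_iff_false, iff_false]
      exact fun hx => h ⟨lt_of_le_of_ne hx.1.1 ht.symm, hx.1.2⟩
  rw [lintegral_congr_ae hslice, lintegral_indicator measurableSet_Ioo,
    lintegral_mul_const _ (by fun_prop), lintegral_Ioo_pow, hcard]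
  push_cast
  rfl

/-- Conditioning on the position of the largest label. -/
lemma card_mul_orderVolume {ι : Type*} [Fintype ι] [DecidableEq ι] [Nonempty ι]
    (r : ι → ι → Prop) [DecidablePred fun b => ∀ j, ¬ r b j] :
    Fintype.card ι * orderVolume r = ∑ b with ∀ j, ¬ r b j,
      orderVolume fun i j : {i // i ≠ b} => r i j := by
  have hpos : (Fintype.card ι : ℝ) ≠ 0 := by exact_mod_cast Fintype.card_ne_zero
  have hterm : ∀ b, (volume (labelingsMaxAt r b)).toReal = if ∀ j, ¬ r b j then
      (Fintype.card ι : ℝ)⁻¹ * orderVolume (fun i j : {i // i ≠ b} => r i j) else 0 := by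
    intro b
    split_ifs with hb
    · rw [volume_labelingsMaxAt r b hb, ENNReal.toReal_mul, ENNReal.toReal_ofReal (by positivity)]
      rfl
    · push Not at hb
      obtain ⟨j, hj⟩ := hb
      have : labelingsMaxAt r b = ∅ := by
        ext τ
        simp only [Set.mem_empty_iff_false, iff_false]
        rintro ⟨⟨-, h2⟩, h3⟩
        have h4 := h2 b j hj
        by_cases hjb : j = b
        · exact lt_irrefl _ (hjb ▸ h4)
        · exact lt_asymm h4 (h3 j hjb)
      simp [this]
  have hfin : ∀ b ∈ Finset.univ, volume (labelingsMaxAt r b) ≠ ⊤ := fun b _ =>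
    ((measure_mono fun τ hτ => hτ.1).trans_lt
      (volume_increasingLabelings_ne_top r 1).lt_top).ne
  rw [orderVolume, volume_increasingLabelings_eq_sum, ENNReal.toReal_sum hfin,
    Finset.sum_congr rfl fun b _ => hterm b, ← Finset.sum_filter, ← Finset.mul_sum,
    mul_inv_cancel_left₀ hpos]

lemma orderVolume_of_isEmpty {ι : Type*} [Fintype ι] [IsEmpty ι] (r : ι → ι → Prop) :
    orderVolume r = 1 := by
  have : increasingLabelings r 1 = Set.univ := by
    ext τ; simp [increasingLabelings]
  rw [orderVolume, this, volume_pi, Measure.pi_of_empty]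
  simp

lemma alphaNC_eq_orderVolume {ι : Type*} [LinearOrder ι] (π : Finset (Finset ι)) :
    alphaNC π = orderVolume fun B' B : ↥π => Surrounds (B' : Finset ι) (B : Finset ι) := by
  rw [orderVolume, ← volume_Icc_labelings, alphaNC]
  congr 2
  ext τ
  exact and_congr_right' forall_comm

lemma alphaNC_empty {ι : Type*} [LinearOrder ι] : alphaNC (∅ : Finset (Finset ι)) = 1 := by
  rw [alphaNC_eq_orderVolume]
  exact orderVolume_of_isEmpty _

lemma alphaNC_nonneg {ι : Type*} [LinearOrder ι] (π : Finset (Finset ι)) : 0 ≤ alphaNC π :=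
  ENNReal.toReal_nonneg

open Classical in
lemma card_mul_alphaNC {ι : Type*} [LinearOrder ι] {π : Finset (Finset ι)} (hπ : π.Nonempty) :
    π.card * alphaNC π =
      ∑ B ∈ π with ∀ B' ∈ π, ¬ Surrounds B B', alphaNC (π.erase B) := by
  have : Nonempty ↥π := hπ.to_subtype
  have h := card_mul_orderVolume fun B' B : ↥π => Surrounds (B' : Finset ι) (B : Finset ι)
  rw [Fintype.card_coe, ← alphaNC_eq_orderVolume] at h
  rw [h, Finset.sum_filter, Finset.sum_filter, ← Finset.sum_attach π, Finset.univ_eq_attach]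
  refine Finset.sum_congr rfl fun b _ => ?_
  simp only [Subtype.forall]
  refine if_congr Iff.rfl ?_ rfl
  rw [alphaNC_eq_orderVolume]
  let e : {i : ↥π // i ≠ b} ≃ ↥(π.erase b) :=
    { toFun := fun i => ⟨i.1.1, Finset.mem_erase.2 ⟨fun h => i.2 (Subtype.ext h), i.1.2⟩⟩
      invFun := fun i => ⟨⟨i.1, Finset.mem_of_mem_erase i.2⟩,
        fun h => Finset.ne_of_mem_erase i.2 (congrArg Subtype.val h)⟩
      left_inv := fun i => rfl
      right_inv := fun i => rfl }
  exact orderVolume_congr e fun i j => Iff.rfl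

lemma surrounds_map {ι κ : Type*} [LinearOrder ι] [LinearOrder κ] (e : ι ↪o κ)
    (B' B : Finset ι) :
    Surrounds (B'.map e.toEmbedding) (B.map e.toEmbedding) ↔ Surrounds B' B := by
  simp [Surrounds]

lemma alphaNC_map {ι κ : Type*} [LinearOrder ι] [LinearOrder κ] (e : ι ↪o κ)
    (π : Finset (Finset ι)) :
    alphaNC (π.map (Finset.mapEmbedding e.toEmbedding).toEmbedding) = alphaNC π := by
  rw [alphaNC_eq_orderVolume, alphaNC_eq_orderVolume]
  let f := (Finset.mapEmbedding e.toEmbedding).toEmbedding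
  let E : ↥π ≃ ↥(π.map f) := Equiv.ofBijective
    (fun B => ⟨f B.1, Finset.mem_map_of_mem f B.2⟩)
    ⟨fun B D h => Subtype.ext (f.injective (congrArg Subtype.val h)), fun D => by
      obtain ⟨B, hB, hBD⟩ := Finset.mem_map.1 D.2
      exact ⟨⟨B, hB⟩, Subtype.ext hBD⟩⟩
  exact (orderVolume_congr E fun i j => (surrounds_map e i.1 j.1).symm).symm

lemma mem_NCge2 {k : ℕ} {π : Finset (Finset (Fin k))} :
    π ∈ NCge2 k ↔ IsNC π ∧ ∀ B ∈ π, 2 ≤ B.card := by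
  classical
  simp [NCge2]

lemma IsPartitionOn.eq_of_mem {k : ℕ} {π : Finset (Finset (Fin k))} (h : IsPartitionOn π)
    {B D : Finset (Fin k)} (hB : B ∈ π) (hD : D ∈ π) {i : Fin k} (hiB : i ∈ B) (hiD : i ∈ D) :
    B = D :=
  (h.2 i).unique ⟨hB, hiB⟩ ⟨hD, hiD⟩

/-- The `m` consecutive points of `Fin k` starting at `p`. -/
def finInterval (k p m : ℕ) : Finset (Fin k) :=
  Finset.univ.filter fun x : Fin k => p ≤ (x : ℕ) ∧ (x : ℕ) < p + m

lemma mem_finInterval {k p m : ℕ} {x : Fin k} :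
    x ∈ finInterval k p m ↔ p ≤ (x : ℕ) ∧ (x : ℕ) < p + m := by
  simp [finInterval]

lemma card_finInterval {k p m : ℕ} (h : p + m ≤ k) : (finInterval k p m).card = m := by
  have : (finInterval k p m).map Fin.valEmbedding = Finset.Ico p (p + m) := by
    ext x
    simp only [Finset.mem_map, mem_finInterval, Fin.valEmbedding_apply, Finset.mem_Ico]
    constructor
    · rintro ⟨y, hy, rfl⟩
      exact hy
    · intro hx
      exact ⟨⟨x, by omega⟩, hx, rfl⟩
  rw [← Finset.card_map Fin.valEmbedding, this]
  simp

lemma finInterval_injective {k p m p' m' : ℕ} (h : p + m ≤ k) (h' : p' + m' ≤ k) (hm : 0 < m)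
    (e : finInterval k p m = finInterval k p' m') : p = p' ∧ m = m' := by
  have hcard : m = m' := by rw [← card_finInterval h, e, card_finInterval h']
  subst hcard
  have h1 : (⟨p, by omega⟩ : Fin k) ∈ finInterval k p' m := by
    rw [← e, mem_finInterval]; simp [hm]
  have h2 : (⟨p', by omega⟩ : Fin k) ∈ finInterval k p m := by
    rw [e, mem_finInterval]; simp [hm]
  rw [mem_finInterval] at h1 h2
  simp only at h1 h2
  omega

/-- In a non-crossing partition the innermost blocks are the intervals. -/
lemma IsNC.exists_eq_finInterval {k : ℕ} {π : Finset (Finset (Fin k))} (h : IsNC π)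
    {B : Finset (Fin k)} (hB : B ∈ π) (hin : ∀ B' ∈ π, ¬ Surrounds B B') :
    ∃ p m, p + m ≤ k ∧ B = finInterval k p m := by
  have hne := h.1.1 B hB
  refine ⟨B.min' hne, B.max' hne + 1 - B.min' hne, ?_, ?_⟩
  · have := (B.max' hne).2
    have : ((B.min' hne : Fin k) : ℕ) ≤ B.max' hne := B.min'_le _ (B.max'_mem hne)
    omega
  · have hle : ((B.min' hne : Fin k) : ℕ) ≤ B.max' hne := B.min'_le _ (B.max'_mem hne)
    ext x
    rw [mem_finInterval]
    constructor
    · intro hx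
      have h1 : ((B.min' hne : Fin k) : ℕ) ≤ x := B.min'_le _ hx
      have h2 : (x : ℕ) ≤ (B.max' hne : Fin k) := B.le_max' _ hx
      omega
    · rintro ⟨h1, h2⟩
      by_contra hx
      obtain ⟨D, ⟨hD, hxD⟩, -⟩ := h.1.2 x
      have hi := B.min'_mem hne
      have hj := B.max'_mem hne
      have h3 : B.min' hne < x := lt_of_le_of_ne (Fin.le_def.2 h1) fun e => hx (e ▸ hi)
      have h4 : x < B.max' hne :=
        lt_of_le_of_ne (Fin.le_def.2 (by omega)) fun e => hx (e.symm ▸ hj)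
      have hdis : ∀ i ∈ B, ∀ l ∈ D, ¬ SameBlock π i l := by
        rintro i hiB l hlD ⟨E, hE, hiE, hlE⟩
        have e1 := h.1.eq_of_mem hE hB hiE hiB
        have e2 := h.1.eq_of_mem hE hD hlE hlD
        exact hx (e1 ▸ e2 ▸ hxD)
      refine hin D hD ⟨_, hi, _, hj, fun l hl => ⟨?_, ?_⟩⟩
      · rcases lt_trichotomy (B.min' hne) l with hlt | heq | hgt
        · exact hlt
        · exact absurd ⟨D, hD, heq ▸ hl, hl⟩ (hdis _ hi l hl)
        · obtain ⟨E, hE, h5, h6⟩ := h.2 _ _ _ _ hgt h3 h4 ⟨D, hD, hl, hxD⟩ ⟨B, hB, hi, hj⟩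
          exact absurd ⟨E, hE, h6, h5⟩ (hdis _ hi l hl)
      · rcases lt_trichotomy l (B.max' hne) with hlt | heq | hgt
        · exact hlt
        · exact absurd ⟨D, hD, heq ▸ hl, hl⟩ (hdis _ hj l hl)
        · exact absurd (h.2 _ _ _ _ h3 h4 hgt ⟨B, hB, hi, hj⟩ ⟨D, hD, hxD, hl⟩) (hdis _ hi x hxD)

lemma IsPartitionOn.not_surrounds_finInterval {k p m : ℕ} {π : Finset (Finset (Fin k))}
    (h : IsPartitionOn π) (hI : finInterval k p m ∈ π) {B : Finset (Fin k)} (hB : B ∈ π) :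
    ¬ Surrounds (finInterval k p m) B := by
  rintro ⟨i, hi, j, hj, hij⟩
  obtain ⟨l, hl⟩ := h.1 B hB
  have hlI : l ∈ finInterval k p m := by
    have h1 := hij l hl
    rw [mem_finInterval] at hi hj ⊢
    have : (i : ℕ) < l := h1.1
    have : (l : ℕ) < j := h1.2
    omega
  have := h.eq_of_mem hI hB hlI hl
  exact lt_irrefl i (hij i (this ▸ hi)).1

open Classical in
lemma sum_innermost {k : ℕ} {π : Finset (Finset (Fin k))} (hπ : π ∈ NCge2 k)
    (f : Finset (Fin k) → ℝ) :
    ∑ B ∈ π with ∀ B' ∈ π, ¬ Surrounds B B', f B =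
      ∑ x ∈ Finset.HasAntidiagonal.antidiagonal k, ∑ p ∈ Finset.range (x.1 + 1),
        if 2 ≤ x.2 ∧ finInterval k p x.2 ∈ π then f (finInterval k p x.2) else 0 := by
  rw [mem_NCge2] at hπ
  rw [Finset.sum_sigma', ← Finset.sum_filter]
  symm
  refine Finset.sum_bij (fun y _ => finInterval k y.2 y.1.2) ?_ ?_ ?_ ?_
  · rintro ⟨x, p⟩ hy
    simp only [Finset.mem_filter, Finset.mem_sigma] at hy ⊢
    exact ⟨hy.2.2, fun B' hB' => hπ.1.1.not_surrounds_finInterval hy.2.2 hB'⟩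
  · rintro ⟨⟨a, m⟩, p⟩ hy ⟨⟨a', m'⟩, p'⟩ hy' e
    simp only [Finset.mem_filter, Finset.mem_sigma, Finset.HasAntidiagonal.mem_antidiagonal,
      Finset.mem_range] at hy hy'
    change finInterval k p m = finInterval k p' m' at e
    obtain ⟨h1, h2⟩ := finInterval_injective (by omega) (by omega) (by omega) e
    have : a = a' := by omega
    subst h1 h2 this
    rfl
  · intro B hB
    rw [Finset.mem_filter] at hB
    obtain ⟨p, m, hpm, rfl⟩ := hπ.1.exists_eq_finInterval hB.1 hB.2
    have h2 := hπ.2 _ hB.1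
    rw [card_finInterval hpm] at h2
    refine ⟨⟨(k - m, m), p⟩, ?_, rfl⟩
    simp only [Finset.mem_filter, Finset.mem_sigma, Finset.HasAntidiagonal.mem_antidiagonal,
      Finset.mem_range]
    exact ⟨⟨by omega, by omega⟩, h2, hB.1⟩
  · intros
    rfl

/-- The increasing map `Fin a → Fin (a + m)` whose range omits `m` points starting at `p`. -/
def finSkip (a m p : ℕ) : Fin a ↪o Fin (a + m) :=
  OrderEmbedding.ofStrictMono
    (fun i => ⟨if (i : ℕ) < p then i else i + m, by split_ifs <;> omega⟩) (by
      intro i j hij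
      have : (i : ℕ) < j := hij
      simp only [Fin.lt_def]
      split_ifs <;> omega)

lemma coe_finSkip (a m p : ℕ) (i : Fin a) :
    (finSkip a m p i : ℕ) = if (i : ℕ) < p then (i : ℕ) else i + m := rfl

lemma finSkip_notMem_finInterval (a m p : ℕ) (i : Fin a) :
    finSkip a m p i ∉ finInterval (a + m) p m := by
  rw [mem_finInterval, coe_finSkip]
  split_ifs <;> omega

lemma exists_finSkip_eq {a m p : ℕ} (hp : p ≤ a) {x : Fin (a + m)}
    (hx : x ∉ finInterval (a + m) p m) : ∃ i, finSkip a m p i = x := by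
  rw [mem_finInterval] at hx
  by_cases h : (x : ℕ) < p
  · exact ⟨⟨x, by omega⟩, Fin.ext (by rw [coe_finSkip]; simp [h])⟩
  · refine ⟨⟨x - m, by omega⟩, Fin.ext ?_⟩
    rw [coe_finSkip]
    simp only
    split_ifs <;> omega

/-- Insert a new block of `m` consecutive points at position `p`. -/
def insertInterval {a : ℕ} (m p : ℕ) (π : Finset (Finset (Fin a))) :
    Finset (Finset (Fin (a + m))) :=
  insert (finInterval (a + m) p m)
    (π.map (Finset.mapEmbedding (finSkip a m p).toEmbedding).toEmbedding)

lemma mem_insertInterval {a m p : ℕ} {π : Finset (Finset (Fin a))} {B : Finset (Fin (a + m))} :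
    B ∈ insertInterval m p π ↔ B = finInterval (a + m) p m ∨
      ∃ D ∈ π, D.map (finSkip a m p).toEmbedding = B := by
  simp [insertInterval, Finset.mapEmbedding_apply]

lemma map_finSkip_ne_finInterval {a m p : ℕ} (hm : 0 < m) (hp : p ≤ a) (D : Finset (Fin a)) :
    D.map (finSkip a m p).toEmbedding ≠ finInterval (a + m) p m := by
  intro h
  have hx : (⟨p, by omega⟩ : Fin (a + m)) ∈ finInterval (a + m) p m := by
    rw [mem_finInterval]; simp [hm]
  have hx' := hx
  rw [← h, Finset.mem_map] at hx'
  obtain ⟨i, -, hi⟩ := hx'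
  exact finSkip_notMem_finInterval a m p i (by rw [← hi] at hx; exact hx)

lemma finInterval_notMem_map {a m p : ℕ} (hm : 0 < m) (hp : p ≤ a) (π : Finset (Finset (Fin a))) :
    finInterval (a + m) p m ∉
      π.map (Finset.mapEmbedding (finSkip a m p).toEmbedding).toEmbedding := by
  rw [Finset.mem_map]
  rintro ⟨D, -, hD⟩
  exact map_finSkip_ne_finInterval hm hp D hD

lemma erase_insertInterval {a m p : ℕ} (hm : 0 < m) (hp : p ≤ a)
    (π : Finset (Finset (Fin a))) :
    (insertInterval m p π).erase (finInterval (a + m) p m) =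
      π.map (Finset.mapEmbedding (finSkip a m p).toEmbedding).toEmbedding :=
  Finset.erase_insert (finInterval_notMem_map hm hp π)

lemma card_insertInterval {a m p : ℕ} (hm : 0 < m) (hp : p ≤ a) (π : Finset (Finset (Fin a))) :
    (insertInterval m p π).card = π.card + 1 := by
  rw [insertInterval, Finset.card_insert_of_notMem (finInterval_notMem_map hm hp π),
    Finset.card_map]

lemma sameBlock_insertInterval {a m p : ℕ} {π : Finset (Finset (Fin a))} {i j : Fin a} :
    SameBlock (insertInterval m p π) (finSkip a m p i) (finSkip a m p j) ↔ SameBlock π i j := by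
  constructor
  · rintro ⟨B, hB, hi, hj⟩
    rcases mem_insertInterval.1 hB with rfl | ⟨D, hD, rfl⟩
    · exact absurd hi (finSkip_notMem_finInterval a m p i)
    · exact ⟨D, hD, by simpa using hi, by simpa using hj⟩
  · rintro ⟨D, hD, hi, hj⟩
    exact ⟨_, mem_insertInterval.2 (Or.inr ⟨D, hD, rfl⟩), by simpa using hi, by simpa using hj⟩

lemma sameBlock_insertInterval_iff_of_mem {a m p : ℕ} {π : Finset (Finset (Fin a))}
    {x y : Fin (a + m)} (hx : x ∈ finInterval (a + m) p m) :
    SameBlock (insertInterval m p π) x y ↔ y ∈ finInterval (a + m) p m := by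
  constructor
  · rintro ⟨B, hB, hxB, hyB⟩
    rcases mem_insertInterval.1 hB with rfl | ⟨D, hD, rfl⟩
    · exact hyB
    · obtain ⟨i, -, rfl⟩ := Finset.mem_map.1 hxB
      exact absurd hx (finSkip_notMem_finInterval a m p i)
  · intro hy
    exact ⟨_, mem_insertInterval.2 (Or.inl rfl), hx, hy⟩

lemma SameBlock.symm {k : ℕ} {π : Finset (Finset (Fin k))} {i j : Fin k} (h : SameBlock π i j) :
    SameBlock π j i :=
  let ⟨B, hB, hi, hj⟩ := h
  ⟨B, hB, hj, hi⟩

lemma insertInterval_mem_NCge2_iff {a m p : ℕ} (hm : 2 ≤ m) (hp : p ≤ a)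
    {π : Finset (Finset (Fin a))} :
    insertInterval m p π ∈ NCge2 (a + m) ↔ π ∈ NCge2 a := by
  rw [mem_NCge2, mem_NCge2]
  constructor
  · rintro ⟨⟨⟨hne, hex⟩, hnc⟩, hcard⟩
    have hmem : ∀ {D}, D ∈ π → D.map (finSkip a m p).toEmbedding ∈ insertInterval m p π :=
      fun hD => mem_insertInterval.2 (Or.inr ⟨_, hD, rfl⟩)
    refine ⟨⟨⟨fun D hD => by simpa using hne _ (hmem hD), fun i => ?_⟩, ?_⟩,
      fun D hD => by simpa using hcard _ (hmem hD)⟩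
    · obtain ⟨B, ⟨hB, hiB⟩, huniq⟩ := hex (finSkip a m p i)
      rcases mem_insertInterval.1 hB with rfl | ⟨D, hD, rfl⟩
      · exact absurd hiB (finSkip_notMem_finInterval a m p i)
      · refine ⟨D, ⟨hD, by simpa using hiB⟩, fun E ⟨hE, hiE⟩ => ?_⟩
        exact Finset.map_injective _ (huniq _ ⟨hmem hE, by simpa using hiE⟩)
    · intro i₁ j₁ i₂ j₂ h1 h2 h3 h4 h5
      exact sameBlock_insertInterval.1 (hnc _ _ _ _ ((finSkip a m p).lt_iff_lt.2 h1)
        ((finSkip a m p).lt_iff_lt.2 h2) ((finSkip a m p).lt_iff_lt.2 h3)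
        (sameBlock_insertInterval.2 h4) (sameBlock_insertInterval.2 h5))
  · rintro ⟨⟨⟨hne, hex⟩, hnc⟩, hcard⟩
    refine ⟨⟨⟨fun B hB => ?_, fun x => ?_⟩, ?_⟩, fun B hB => ?_⟩
    · rcases mem_insertInterval.1 hB with rfl | ⟨D, hD, rfl⟩
      · rw [← Finset.card_pos, card_finInterval (by omega)]
        omega
      · simpa using hne D hD
    · by_cases hx : x ∈ finInterval (a + m) p m
      · refine ⟨_, ⟨mem_insertInterval.2 (Or.inl rfl), hx⟩, fun E ⟨hE, hxE⟩ => ?_⟩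
        rcases mem_insertInterval.1 hE with rfl | ⟨D, hD, rfl⟩
        · rfl
        · obtain ⟨i, -, rfl⟩ := Finset.mem_map.1 hxE
          exact absurd hx (finSkip_notMem_finInterval a m p i)
      · obtain ⟨i, rfl⟩ := exists_finSkip_eq hp hx
        obtain ⟨D, ⟨hD, hiD⟩, huniq⟩ := hex i
        refine ⟨_, ⟨mem_insertInterval.2 (Or.inr ⟨D, hD, rfl⟩), by simpa using hiD⟩,
          fun E ⟨hE, hxE⟩ => ?_⟩
        rcases mem_insertInterval.1 hE with rfl | ⟨D', hD', rfl⟩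
        · exact absurd hxE hx
        · rw [huniq D' ⟨hD', by simpa using hxE⟩]
    · intro i₁ j₁ i₂ j₂ h1 h2 h3 h4 h5
      have hconv : ∀ {x y z : Fin (a + m)}, x < y → y < z → x ∈ finInterval (a + m) p m →
          z ∈ finInterval (a + m) p m → y ∈ finInterval (a + m) p m := by
        intro x y z hxy hyz hx hz
        rw [mem_finInterval] at *
        have : (x : ℕ) < y := hxy
        have : (y : ℕ) < z := hyz
        omega
      by_cases hi : i₁ ∈ finInterval (a + m) p m
      · rw [sameBlock_insertInterval_iff_of_mem hi] at h4 ⊢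
        exact hconv h1 h2 hi h4
      have hi2 : i₂ ∉ finInterval (a + m) p m := fun h =>
        hi ((sameBlock_insertInterval_iff_of_mem h).1 h4.symm)
      by_cases hj : j₁ ∈ finInterval (a + m) p m
      · rw [sameBlock_insertInterval_iff_of_mem hj] at h5
        exact absurd (hconv h2 h3 hj h5) hi2
      have hj2 : j₂ ∉ finInterval (a + m) p m := fun h =>
        hj ((sameBlock_insertInterval_iff_of_mem h).1 h5.symm)
      obtain ⟨i₁, rfl⟩ := exists_finSkip_eq hp hi
      obtain ⟨i₂, rfl⟩ := exists_finSkip_eq hp hi2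
      obtain ⟨j₁, rfl⟩ := exists_finSkip_eq hp hj
      obtain ⟨j₂, rfl⟩ := exists_finSkip_eq hp hj2
      rw [OrderEmbedding.lt_iff_lt] at h1 h2 h3
      rw [sameBlock_insertInterval] at h4 h5 ⊢
      exact hnc _ _ _ _ h1 h2 h3 h4 h5
    · rcases mem_insertInterval.1 hB with rfl | ⟨D, hD, rfl⟩
      · rwa [card_finInterval (by omega)]
      · simpa using hcard D hD

lemma IsPartitionOn.exists_insertInterval_eq {a m p : ℕ} (hp : p ≤ a)
    {π : Finset (Finset (Fin (a + m)))} (h : IsPartitionOn π)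
    (hI : finInterval (a + m) p m ∈ π) : ∃ σ, insertInterval m p σ = π := by
  classical
  refine ⟨Finset.univ.filter fun D => D.map (finSkip a m p).toEmbedding ∈ π, ?_⟩
  ext B
  rw [mem_insertInterval]
  constructor
  · rintro (rfl | ⟨D, hD, rfl⟩)
    · exact hI
    · simpa using hD
  · intro hB
    by_cases hBI : B = finInterval (a + m) p m
    · exact Or.inl hBI
    · right
      have hmap : (Finset.univ.filter fun i => finSkip a m p i ∈ B).map
          (finSkip a m p).toEmbedding = B := by
        ext x
        simp only [Finset.mem_map, Finset.mem_filter, Finset.mem_univ, true_and]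
        constructor
        · rintro ⟨i, hi, rfl⟩
          exact hi
        · intro hx
          obtain ⟨i, rfl⟩ := exists_finSkip_eq hp fun hxI => hBI (h.eq_of_mem hB hI hx hxI)
          exact ⟨i, hx, rfl⟩
      exact ⟨_, by simpa [hmap] using hB, hmap⟩

/-- The total order volume of the partitions in `NCge2 k` with `n` blocks. -/
noncomputable def ncVolume (k n : ℕ) : ℝ :=
  ∑ π ∈ NCge2 k with π.card = n, alphaNC π

open Classical in
lemma sum_alphaNC_erase_finInterval {a m p : ℕ} (n : ℕ) (hm : 2 ≤ m) (hp : p ≤ a) :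
    ∑ π ∈ NCge2 (a + m) with π.card = n + 1, (if finInterval (a + m) p m ∈ π then
      alphaNC (π.erase (finInterval (a + m) p m)) else 0) = ncVolume a n := by
  rw [← Finset.sum_filter, ncVolume]
  symm
  refine Finset.sum_bij (fun σ _ => insertInterval m p σ) ?_ ?_ ?_ ?_
  · intro σ hσ
    rw [Finset.mem_filter] at hσ
    rw [Finset.mem_filter, Finset.mem_filter, insertInterval_mem_NCge2_iff hm hp,
      card_insertInterval (by omega) hp]
    exact ⟨⟨hσ.1, by omega⟩, mem_insertInterval.2 (Or.inl rfl)⟩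
  · intro σ _ σ' _ e
    have := congrArg (fun π => π.erase (finInterval (a + m) p m)) e
    simp only [erase_insertInterval (show 0 < m by omega) hp] at this
    exact Finset.map_injective _ this
  · intro π hπ
    rw [Finset.mem_filter, Finset.mem_filter] at hπ
    obtain ⟨σ, rfl⟩ := (mem_NCge2.1 hπ.1.1).1.1.exists_insertInterval_eq hp hπ.2
    rw [insertInterval_mem_NCge2_iff hm hp, card_insertInterval (by omega) hp] at hπ
    exact ⟨σ, Finset.mem_filter.2 ⟨hπ.1.1, by omega⟩, rfl⟩
  · intro σ _
    rw [erase_insertInterval (by omega) hp, alphaNC_map]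

/-- Removing the block with the largest label. -/
lemma succ_mul_ncVolume_succ (k n : ℕ) :
    ((n : ℝ) + 1) * ncVolume k (n + 1) = ∑ x ∈ Finset.HasAntidiagonal.antidiagonal k,
      if 2 ≤ x.2 then ((x.1 : ℝ) + 1) * ncVolume x.1 n else 0 := by
  classical
  have hstep : ∀ π ∈ NCge2 k, π.card = n + 1 → ((n : ℝ) + 1) * alphaNC π =
      ∑ x ∈ Finset.HasAntidiagonal.antidiagonal k, ∑ p ∈ Finset.range (x.1 + 1),
        if 2 ≤ x.2 ∧ finInterval k p x.2 ∈ π then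
          alphaNC (π.erase (finInterval k p x.2)) else 0 := by
    intro π hπ hc
    have h := card_mul_alphaNC (π := π) (Finset.card_pos.1 (by omega))
    rw [hc] at h
    push_cast at h
    rw [← sum_innermost hπ fun B => alphaNC (π.erase B), h]
    congr!
  rw [ncVolume, Finset.mul_sum, Finset.sum_congr rfl fun π hπ =>
    hstep π (Finset.mem_filter.1 hπ).1 (Finset.mem_filter.1 hπ).2, Finset.sum_comm]
  refine Finset.sum_congr rfl fun x hx => ?_
  obtain ⟨a, m⟩ := x
  obtain rfl : a + m = k := Finset.HasAntidiagonal.mem_antidiagonal.1 hx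
  rw [Finset.sum_comm]
  by_cases hm : 2 ≤ m
  · simp only [hm, true_and, if_true]
    rw [Finset.sum_congr rfl fun p hp => sum_alphaNC_erase_finInterval n hm
      (Nat.lt_succ_iff.1 (Finset.mem_range.1 hp))]
    simp
  · simp [hm]

lemma two_mul_card_le_of_mem_NCge2 {k : ℕ} {π : Finset (Finset (Fin k))} (hπ : π ∈ NCge2 k) :
    2 * π.card ≤ k := by
  rw [mem_NCge2] at hπ
  have hdisj : (π : Set (Finset (Fin k))).PairwiseDisjoint id := fun B hB D hD hne =>
    Finset.disjoint_left.2 fun i hiB hiD => hne (hπ.1.1.eq_of_mem hB hD hiB hiD)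
  calc 2 * π.card = ∑ B ∈ π, 2 := by simp [mul_comm]
    _ ≤ ∑ B ∈ π, (id B).card := Finset.sum_le_sum hπ.2
    _ = (π.biUnion id).card := (Finset.card_biUnion hdisj).symm
    _ ≤ k := (Finset.card_le_univ _).trans_eq (Fintype.card_fin k)

lemma ncVolume_eq_zero {k n : ℕ} (h : k < 2 * n) : ncVolume k n = 0 := by
  rw [ncVolume, Finset.filter_false_of_mem, Finset.sum_empty]
  intro π hπ hc
  have := two_mul_card_le_of_mem_NCge2 hπ
  omega

lemma ncVolume_nonneg (k n : ℕ) : 0 ≤ ncVolume k n :=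
  Finset.sum_nonneg fun π _ => alphaNC_nonneg π

lemma ncVolume_zero (k : ℕ) : ncVolume k 0 = if k = 0 then 1 else 0 := by
  rcases Nat.eq_zero_or_pos k with rfl | hk
  · have : (NCge2 0).filter (fun π => π.card = 0) = {∅} := by
      ext π
      simp only [Finset.mem_filter, Finset.card_eq_zero, Finset.mem_singleton, mem_NCge2]
      refine ⟨fun h => h.2, ?_⟩
      rintro rfl
      exact ⟨⟨⟨⟨by simp, fun i => i.elim0⟩, fun i => i.elim0⟩, by simp⟩, rfl⟩
    rw [ncVolume, this, Finset.sum_singleton, alphaNC_empty]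
    simp
  · rw [ncVolume, Finset.filter_false_of_mem, Finset.sum_empty, if_neg (by omega)]
    intro π hπ hc
    obtain ⟨B, hB, -⟩ := (mem_NCge2.1 hπ).1.1.2 ⟨0, hk⟩
    rw [Finset.card_eq_zero.1 hc] at hB
    simp at hB

/-- The coefficient of `C ^ n * ζ ^ k` in the generating function. -/
noncomputable def ncCoeff (M : ℝ) (n k : ℕ) : ℝ := ncVolume k n * M ^ (k - 2 * n)

lemma ncCoeff_nonneg {M : ℝ} (hM : 0 ≤ M) (n k : ℕ) : 0 ≤ ncCoeff M n k :=
  mul_nonneg (ncVolume_nonneg k n) (pow_nonneg hM _)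

lemma ncCoeff_zero (M : ℝ) (k : ℕ) : ncCoeff M 0 k = if k = 0 then 1 else 0 := by
  rw [ncCoeff, ncVolume_zero]
  split_ifs with h <;> simp [h]

lemma succ_mul_ncCoeff_succ (M : ℝ) (n k : ℕ) :
    ((n : ℝ) + 1) * ncCoeff M (n + 1) k = ∑ x ∈ Finset.HasAntidiagonal.antidiagonal k,
      (((x.1 : ℝ) + 1) * ncCoeff M n x.1) * (if 2 ≤ x.2 then M ^ (x.2 - 2) else 0) := by
  rw [ncCoeff, ← mul_assoc, succ_mul_ncVolume_succ, Finset.sum_mul]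
  refine Finset.sum_congr rfl fun x hx => ?_
  have hk := Finset.HasAntidiagonal.mem_antidiagonal.1 hx
  split_ifs with h2
  · by_cases h : x.1 < 2 * n
    · simp [ncCoeff, ncVolume_eq_zero h]
    · rw [ncCoeff, show k - 2 * (n + 1) = (x.1 - 2 * n) + (x.2 - 2) by omega, pow_add]
      ring
  · simp

lemma sum_NCge2_eq (C M : ℝ) (k : ℕ) :
    ∑ π ∈ NCge2 k, alphaNC π * C ^ π.card * M ^ (k - 2 * π.card) =
      ∑ n ∈ Finset.range (k + 1), C ^ n * ncCoeff M n k := by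
  rw [← Finset.sum_fiberwise_of_maps_to (s := NCge2 k) (t := Finset.range (k + 1))
    (g := Finset.card) fun π hπ => by
      have := two_mul_card_le_of_mem_NCge2 hπ
      rw [Finset.mem_range]; omega]
  refine Finset.sum_congr rfl fun n _ => ?_
  rw [ncCoeff, ncVolume, Finset.sum_mul, Finset.mul_sum]
  refine Finset.sum_congr rfl fun π hπ => ?_
  rw [(Finset.mem_filter.1 hπ).2]
  ring

/-- The generating function of `ncCoeff M n`. -/
noncomputable def ncSeries (M : ℝ) (n : ℕ) (z : ℂ) : ℂ := ∑' k, (ncCoeff M n k : ℂ) * z ^ k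

lemma hasSum_shifted_geometric {M : ℝ} {z : ℂ} (hz : ‖(M : ℂ) * z‖ < 1) :
    HasSum (fun j : ℕ => ((if 2 ≤ j then M ^ (j - 2) else 0 : ℝ) : ℂ) * z ^ j)
      (z ^ 2 / (1 - M * z)) := by
  rw [← hasSum_nat_add_iff' 2]
  have h := (hasSum_geometric_of_norm_lt_one hz).mul_left (z ^ 2)
  convert! h using 1
  · ext j
    simp only [le_add_iff_nonneg_left, zero_le, if_true, Nat.add_sub_cancel]
    push_cast
    ring
  · simp [Finset.sum_range_succ, div_eq_mul_inv]

lemma hasSum_deriv_ncSeries {M : ℝ} (hM : 0 ≤ M) {n : ℕ}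
    (hS : ∀ z : ℂ, ‖(M : ℂ) * z‖ < 1 → Summable fun k => (ncCoeff M n k : ℂ) * z ^ k)
    {z : ℂ} (hz : ‖(M : ℂ) * z‖ < 1) :
    HasSum (fun k : ℕ => ((k : ℂ) + 1) * ncCoeff M n k * z ^ k)
      (deriv (fun w => w * ncSeries M n w) z) := by
  obtain ⟨r, hzr, hr⟩ : ∃ r, ‖z‖ < r ∧ M * r < 1 := by
    rw [norm_mul, Complex.norm_real, Real.norm_of_nonneg hM] at hz
    rcases hM.eq_or_lt with rfl | hM
    · exact ⟨‖z‖ + 1, by linarith, by simp⟩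
    · obtain ⟨r, h1, h2⟩ := exists_between (show ‖z‖ < 1 / M by rw [lt_div_iff₀' hM]; exact hz)
      exact ⟨r, h1, by rwa [lt_div_iff₀' hM] at h2⟩
  have hr0 : 0 < r := (norm_nonneg z).trans_lt hzr
  have hu : Summable fun k : ℕ => ncCoeff M n k * r ^ (k + 1) := by
    have := hS (r : ℂ) (by
      rw [norm_mul, Complex.norm_real, Complex.norm_real, Real.norm_of_nonneg hM,
        Real.norm_of_nonneg hr0.le]
      exact hr)
    have h2 : Summable fun k : ℕ => ncCoeff M n k * r ^ k := by
      rw [← Complex.summable_ofReal]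
      simpa using this
    simpa [pow_succ, mul_assoc] using h2.mul_right r
  have h := Complex.hasSum_deriv_of_summable_norm (z := z) (U := Metric.ball 0 r)
    (F := fun k w => (ncCoeff M n k : ℂ) * w ^ (k + 1)) hu
    (fun k => by fun_prop) Metric.isOpen_ball (fun k w hw => by
      rw [norm_mul, norm_pow, Complex.norm_real, Real.norm_of_nonneg (ncCoeff_nonneg hM n k)]
      have : ‖w‖ ≤ r := by simpa using (Metric.mem_ball.1 hw).le
      have := ncCoeff_nonneg hM n k
      gcongr) (by simpa using hzr)
  convert! h using 1
  · ext k
    have := ((hasDerivAt_pow (k + 1) z).const_mul (ncCoeff M n k : ℂ)).deriv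
    rw [this]
    rw [Nat.add_sub_cancel]
    push_cast
    ring
  · congr 1
    ext w
    rw [ncSeries, ← tsum_mul_left]
    congr 1
    ext k
    ring

lemma hasSum_ncSeries_succ {M : ℝ} (hM : 0 ≤ M) {n : ℕ}
    (hS : ∀ z : ℂ, ‖(M : ℂ) * z‖ < 1 → Summable fun k => (ncCoeff M n k : ℂ) * z ^ k)
    {z : ℂ} (hz : ‖(M : ℂ) * z‖ < 1) :
    HasSum (fun k => (ncCoeff M (n + 1) k : ℂ) * z ^ k)
      (((n : ℂ) + 1)⁻¹ * (deriv (fun w => w * ncSeries M n w) z * (z ^ 2 / (1 - M * z)))) := by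
  have h1 := hasSum_deriv_ncSeries hM hS hz
  have h2 := hasSum_shifted_geometric hz
  have h3 := (summable_norm_sum_mul_antidiagonal_of_summable_norm h1.summable.norm
    h2.summable.norm).of_norm.hasSum
  rw [← tsum_mul_tsum_eq_tsum_sum_antidiagonal_of_summable_norm h1.summable.norm
    h2.summable.norm, h1.tsum_eq, h2.tsum_eq] at h3
  have hn : (n : ℂ) + 1 ≠ 0 := by exact_mod_cast n.succ_ne_zero
  convert! h3.mul_left ((n : ℂ) + 1)⁻¹ using 1
  ext k
  have hrec := congrArg (fun x : ℝ => (x : ℂ)) (succ_mul_ncCoeff_succ M n k)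
  simp only [Complex.ofReal_mul, Complex.ofReal_sum, Complex.ofReal_add, Complex.ofReal_natCast,
    Complex.ofReal_one] at hrec
  rw [eq_inv_mul_iff_mul_eq₀ hn, ← mul_assoc, hrec, Finset.sum_mul]
  refine Finset.sum_congr rfl fun x hx => ?_
  rw [← Finset.HasAntidiagonal.mem_antidiagonal.1 hx, pow_add]
  ring

lemma summable_ncSeries {M : ℝ} (hM : 0 ≤ M) (n : ℕ) :
    ∀ z : ℂ, ‖(M : ℂ) * z‖ < 1 → Summable fun k => (ncCoeff M n k : ℂ) * z ^ k := by
  induction n with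
  | zero =>
    intro z _
    refine summable_of_ne_finset_zero (s := {0}) fun k hk => ?_
    simp [ncCoeff_zero, Finset.notMem_singleton.1 hk]
  | succ n ih => exact fun z hz => (hasSum_ncSeries_succ hM ih hz).summable

lemma ncSeries_zero (M : ℝ) (z : ℂ) : ncSeries M 0 z = 1 := by
  rw [ncSeries, tsum_eq_single 0]
  · simp [ncCoeff_zero]
  · intro k hk
    simp [ncCoeff_zero, hk]

/-- The generating function along the characteristics of its transport equation. -/
noncomputable def ncProfile (M : ℝ) (y : ℂ) : ℂ := ((2 * y) ^ (2⁻¹ : ℂ) + M)⁻¹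

lemma two_mul_mem_slitPlane {y : ℂ} (hy : y ∈ Complex.slitPlane) :
    2 * y ∈ Complex.slitPlane := by
  rw [Complex.mem_slitPlane_iff] at *
  simpa using hy

lemma re_cpow_two_inv_pos {y : ℂ} (hy : y ∈ Complex.slitPlane) : 0 < (y ^ (2⁻¹ : ℂ)).re := by
  rw [Complex.cpow_def_of_ne_zero (Complex.slitPlane_ne_zero hy), Complex.exp_re]
  have him : (Complex.log y * 2⁻¹).im = y.arg / 2 := by
    rw [show (2⁻¹ : ℂ) = ((2⁻¹ : ℝ) : ℂ) by push_cast; rfl, Complex.im_mul_ofReal, Complex.log_im]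
    ring
  rw [him]
  have h1 := Complex.arg_mem_Ioc y
  have h2 := (Complex.mem_slitPlane_iff_arg.1 hy).1
  have h3 := lt_of_le_of_ne h1.2 h2
  exact mul_pos (Real.exp_pos _) (Real.cos_pos_of_mem_Ioo ⟨by linarith [h1.1], by linarith⟩)

lemma differentiableOn_ncProfile {M : ℝ} (hM : 0 ≤ M) :
    DifferentiableOn ℂ (ncProfile M) Complex.slitPlane := by
  intro y hy
  have hy2 := two_mul_mem_slitPlane hy
  refine DifferentiableAt.differentiableWithinAt ?_
  refine DifferentiableAt.fun_inv
    (((differentiableAt_id.const_mul (2 : ℂ)).cpow_const ?_).add_const _) ?_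
  · exact hy2
  · intro h
    have := congrArg Complex.re h
    have hpos := re_cpow_two_inv_pos hy2
    simp only [Complex.add_re, Complex.ofReal_re, Complex.zero_re] at this
    linarith

lemma hasDerivAt_iteratedDeriv_ncProfile {M : ℝ} (hM : 0 ≤ M) (n : ℕ) {y : ℂ}
    (hy : y ∈ Complex.slitPlane) :
    HasDerivAt (iteratedDeriv n (ncProfile M)) (iteratedDeriv (n + 1) (ncProfile M) y) y := by
  rw [iteratedDeriv_succ, iteratedDeriv_eq_iterate]
  exact ((((differentiableOn_ncProfile hM).analyticOnNhd
    Complex.isOpen_slitPlane).iterated_deriv n) y hy).differentiableAt.hasDerivAt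

lemma half_sq_mem_slitPlane {u : ℂ} (hu : 0 < u.re) : u ^ 2 / 2 ∈ Complex.slitPlane := by
  have h : u ^ 2 / 2 = ((2⁻¹ : ℝ) : ℂ) * (u * u) := by push_cast; ring
  rw [h, Complex.mem_slitPlane_iff, Complex.re_ofReal_mul, Complex.im_ofReal_mul, Complex.mul_re,
    Complex.mul_im]
  by_cases hi : u.im = 0
  · left
    rw [hi]
    nlinarith
  · right
    have : u.re * u.im ≠ 0 := mul_ne_zero hu.ne' hi
    intro h0
    apply this
    linarith

lemma mul_ncSeries_eq {M : ℝ} (hM : 0 ≤ M) (n : ℕ) :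
    ∀ z : ℂ, M < (z⁻¹).re → z * ncSeries M n z =
      (-1) ^ n / (n.factorial : ℂ) * iteratedDeriv n (ncProfile M) ((z⁻¹ - M) ^ 2 / 2) := by
  have hu : ∀ z : ℂ, M < (z⁻¹).re → 0 < (z⁻¹ - M).re := fun z hz => by
    simpa using hz
  have hz0 : ∀ z : ℂ, M < (z⁻¹).re → z ≠ 0 := by
    rintro z hz rfl
    simp at hz
    linarith
  induction n with
  | zero =>
    intro z hz
    rw [ncSeries_zero, iteratedDeriv_zero, ncProfile, mul_div_cancel₀ _ two_ne_zero,
      Complex.sq_cpow_two_inv (hu z hz)]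
    simp
  | succ n ih =>
    intro z hz
    have hz0' := hz0 z hz
    have hnorm : ‖(M : ℂ) * z‖ < 1 := by
      have h1 : M < ‖z⁻¹‖ := hz.trans_le (Complex.re_le_norm _)
      have hpos : 0 < ‖z‖ := norm_pos_iff.2 hz0'
      rw [norm_inv] at h1
      rw [norm_mul, Complex.norm_real, Real.norm_of_nonneg hM]
      calc M * ‖z‖ < ‖z‖⁻¹ * ‖z‖ := by gcongr
        _ = 1 := inv_mul_cancel₀ hpos.ne'
    have hev : (fun w => w * ncSeries M n w) =ᶠ[nhds z] fun w => (-1) ^ n / (n.factorial : ℂ) *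
        iteratedDeriv n (ncProfile M) ((w⁻¹ - M) ^ 2 / 2) := by
      have hc : ContinuousAt (fun w : ℂ => (w⁻¹).re) z :=
        Complex.continuous_re.continuousAt.comp (continuousAt_inv₀ hz0')
      filter_upwards [hc.eventually (lt_mem_nhds hz)] with w hw
      exact ih w hw
    have hy : HasDerivAt (fun w : ℂ => (w⁻¹ - M) ^ 2 / 2) (-(z⁻¹ - M) / z ^ 2) z := by
      have := ((((hasDerivAt_inv hz0').sub_const (M : ℂ)).pow 2).div_const 2)
      convert! this using 1
      simp
      field_simp
      ring
    have hd : deriv (fun w => w * ncSeries M n w) z = (-1) ^ n / (n.factorial : ℂ) *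
        (iteratedDeriv (n + 1) (ncProfile M) ((z⁻¹ - M) ^ 2 / 2) * (-(z⁻¹ - M) / z ^ 2)) := by
      rw [hev.deriv_eq]
      exact (((hasDerivAt_iteratedDeriv_ncProfile hM n
        (half_sq_mem_slitPlane (hu z hz))).comp z hy).const_mul _).deriv
    have h1 : (1 : ℂ) - M * z ≠ 0 := by
      intro h
      have : (M : ℂ) * z = 1 := by linear_combination -h
      rw [this] at hnorm
      simp at hnorm
    rw [ncSeries, (hasSum_ncSeries_succ hM (summable_ncSeries hM n) hnorm).tsum_eq, hd,
      Nat.factorial_succ]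
    have hn : (n : ℂ) + 1 ≠ 0 := by exact_mod_cast n.succ_ne_zero
    have hf : (n.factorial : ℂ) ≠ 0 := by exact_mod_cast n.factorial_ne_zero
    push_cast
    have h2 : (1 : ℂ) - z * M ≠ 0 := by rwa [mul_comm z]
    field_simp
    ring

lemma hasSum_ncSeries {C M ζ : ℝ} (hC : 0 ≤ C) (hM : 0 ≤ M) (h0 : 0 < ζ)
    (hζ : √(2 * C) < ζ⁻¹ - M) :
    HasSum (fun n => (C : ℂ) ^ n * ncSeries M n ζ)
      ((ζ⁻¹ * (√((ζ⁻¹ - M) ^ 2 - 2 * C) + M)⁻¹ : ℝ) : ℂ) := by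
  have hu : 0 < ζ⁻¹ - M := (Real.sqrt_nonneg _).trans_lt hζ
  have hC2 : 2 * C < (ζ⁻¹ - M) ^ 2 := (Real.sqrt_lt' hu).1 hζ
  set y : ℝ := (ζ⁻¹ - M) ^ 2 / 2 with hy
  have hball : Metric.ball (y : ℂ) y ⊆ Complex.slitPlane := by
    intro x hx
    rw [Complex.mem_slitPlane_iff]
    left
    have h1 : |(x - y).re| < y :=
      (Complex.abs_re_le_norm _).trans_lt (by simpa [dist_eq_norm] using hx)
    rw [Complex.sub_re, Complex.ofReal_re] at h1
    linarith [(abs_lt.1 h1).1]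
  have hmem : ((y - C : ℝ) : ℂ) ∈ Metric.ball (y : ℂ) y := by
    rw [Metric.mem_ball, Complex.dist_eq, ← Complex.ofReal_sub, Complex.norm_real,
      sub_sub_cancel_left, norm_neg, Real.norm_of_nonneg hC]
    linarith
  have h := Complex.hasSum_taylorSeries_on_ball ((differentiableOn_ncProfile hM).mono hball) hmem
  have hval : ncProfile M ((y - C : ℝ) : ℂ) = ((√((ζ⁻¹ - M) ^ 2 - 2 * C) + M)⁻¹ : ℝ) := by
    rw [ncProfile, show (2 : ℂ) * ((y - C : ℝ) : ℂ) = (((ζ⁻¹ - M) ^ 2 - 2 * C : ℝ) : ℂ) by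
      rw [hy]; push_cast; ring, show (2⁻¹ : ℂ) = ((2⁻¹ : ℝ) : ℂ) by push_cast; rfl,
      ← Complex.ofReal_cpow (by linarith), Real.sqrt_eq_rpow]
    push_cast
    norm_num
  rw [hval] at h
  have hζ0 : (ζ : ℂ) ≠ 0 := by exact_mod_cast h0.ne'
  convert! h.mul_left (ζ : ℂ)⁻¹ using 1
  · ext n
    have hn := mul_ncSeries_eq hM n (ζ : ℂ) (by
      rw [← Complex.ofReal_inv, Complex.ofReal_re]; linarith)
    have hyc : ((ζ : ℂ)⁻¹ - M) ^ 2 / 2 = (y : ℂ) := by rw [hy]; push_cast; ring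
    rw [hyc] at hn
    rw [eq_inv_mul_iff_mul_eq₀ hζ0, mul_left_comm, hn, ← Complex.ofReal_sub, sub_sub_cancel_left]
    simp only [smul_eq_mul]
    push_cast
    rw [neg_pow (C : ℂ)]
    ring
  · push_cast
    rfl

lemma hasSum_comm_of_nonneg {f : ℕ → ℕ → ℝ} (hf : ∀ n k, 0 ≤ f n k) {g h : ℕ → ℝ} {a : ℝ}
    (hg : ∀ n, HasSum (f n) (g n)) (hh : ∀ k, HasSum (fun n => f n k) (h k)) (ha : HasSum g a) :
    HasSum h a := by
  have hs : Summable fun x : ℕ × ℕ => f x.1 x.2 := by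
    rw [summable_prod_of_nonneg fun x => hf x.1 x.2]
    refine ⟨fun n => (hg n).summable, ?_⟩
    simpa only [fun n => (hg n).tsum_eq] using ha.summable
  have h1 := hs.hasSum.prod_fiberwise hg
  have h2 := hs.hasSum
  rw [h1.unique ha] at h2
  exact ((Equiv.prodComm ℕ ℕ).hasSum_iff.2 h2).prod_fiberwise hh

/-- The generating function of `NC_{≥2}` partitions weighted by
`α_π C^{|π|} M^{k-2|π|}`: for `0 < ζ < 1/(M + √(2C))`,
`Σ_{k≥0} (Σ_{π ∈ NC_{≥2}(k)} α_π C^{|π|} M^{k-2|π|}) ζ^k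
  = ζ⁻¹ (√((ζ⁻¹ - M)² - 2C) + M)⁻¹`. -/
theorem stmt15 (C M : ℝ) (hC : 0 ≤ C) (hM : 0 ≤ M)
    (ζ : ℝ) (h0 : 0 < ζ) (hζ : ζ < (M + Real.sqrt (2 * C))⁻¹) :
    HasSum
      (fun k : ℕ =>
        (∑ π ∈ NCge2 k, alphaNC π * C ^ π.card * M ^ (k - 2 * π.card)) * ζ ^ k)
      (ζ⁻¹ * (Real.sqrt ((ζ⁻¹ - M) ^ 2 - 2 * C) + M)⁻¹) := by
  have hs := Real.sqrt_nonneg (2 * C)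
  have hpos : 0 < M + √(2 * C) := inv_pos.1 (h0.trans hζ)
  have hζ' : √(2 * C) < ζ⁻¹ - M := by
    have := (lt_inv_comm₀ h0 hpos).1 hζ
    linarith
  have hnorm : ‖(M : ℂ) * (ζ : ℂ)‖ < 1 := by
    rw [← Complex.ofReal_mul, Complex.norm_real, Real.norm_of_nonneg (by positivity)]
    have h1 : M < ζ⁻¹ := by linarith
    calc M * ζ < ζ⁻¹ * ζ := by gcongr
      _ = 1 := inv_mul_cancel₀ h0.ne'
  have hre : ∀ n, Summable fun k => ncCoeff M n k * ζ ^ k := fun n => by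
    rw [← Complex.summable_ofReal]
    simpa using summable_ncSeries hM n (ζ : ℂ) hnorm
  refine hasSum_comm_of_nonneg (f := fun n k => C ^ n * (ncCoeff M n k * ζ ^ k))
    (fun n k => mul_nonneg (pow_nonneg hC n) (mul_nonneg (ncCoeff_nonneg hM n k)
      (pow_nonneg h0.le k))) (fun n => (hre n).hasSum.mul_left (C ^ n)) (fun k => ?_) ?_
  · rw [sum_NCge2_eq, Finset.sum_mul]
    simp only [mul_assoc]
    refine hasSum_sum_of_ne_finset_zero fun n hn => ?_
    rw [Finset.mem_range] at hn
    rw [ncCoeff, ncVolume_eq_zero (by omega)]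
    simp
  · rw [← Complex.hasSum_ofReal]
    convert! hasSum_ncSeries hC hM h0 hζ' using 1
    ext n
    simp [ncSeries, Complex.ofReal_tsum]
end
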